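/- arXiv:2505.19371 — 8 statements merged into one kernel-verified Lean document; each statement's English description precedes it below -/
import Mathlib

section
/- Let V ≥ 1, let p ∈ Δ_V have entries sorted in non-increasing order (p₁ ≥ p₂ ≥ … ≥ p_V), and let φ be primal valid. For a subset Q = {i₁,…,i_k} ⊆ {1,…,V} of size k, define the primal support loss L(Q) = min_{q ∈ Δ_k} [ Σ_{j=1}^k d_φ(q_j, p_{i_j}) + Σ_{i ∉ Q} d_φ(0, p_i) ] (the minimum exists since the objective is continuous on the compact set Δ_k). Then for every subset S' ⊆ {1,…,V} of size k, L(S') ≥ L({1,…,k}); that is, the set of the k largest entries of p minimizes the ℓ₀-regularized primal Bregman decoding loss among all supports of size k. -/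
/-!
Moving `q j` units of mass from an index `j` to an unused index `i` with `p j ≤ p i` changes the
objective by `(φ' (p j) - φ' (p i)) * q j`, because `d_φ(x, y) - d_φ(0, y) = φ x - φ 0 - φ' y * x`
involves `y` only through `φ' y`. Convexity makes `φ'` monotone, so such an exchange never increases
the loss, and finitely many exchanges turn any support into the one formed by the largest entries
of `p`.
-/

open Finset Set Filter

/-- One-dimensional Bregman divergence `d_φ(x,y) = φ(x) − φ(y) − φ'(y)(x−y)`,
with the derivative `φ'` given explicitly. -/
noncomputable def breg (φ φ' : ℝ → ℝ) (x y : ℝ) : ℝ := φ x - φ y - φ' y * (x - y)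

/-- The primal support loss `L(Q)`: the infimum, over sub-probability vectors `q`
supported (and summing to one) on `Q`, of the primal Bregman objective
`Σ_{i∈Q} d_φ(q_i, p_i) + Σ_{i∉Q} d_φ(0, p_i)`. -/
noncomputable def primalLoss {V : ℕ} (φ φ' : ℝ → ℝ) (p : Fin V → ℝ) (S : Finset (Fin V)) : ℝ :=
  sInf {r : ℝ | ∃ q : Fin V → ℝ, (∀ i, q i ∈ Set.Icc (0:ℝ) 1) ∧ ((∑ i ∈ S, q i) = 1) ∧
    r = (∑ i ∈ S, breg φ φ' (q i) (p i)) + ∑ i ∈ Sᶜ, breg φ φ' 0 (p i)}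

section Convex

variable {φ φ' : ℝ → ℝ} {s : Set ℝ}

theorem breg_nonneg (hconv : ConvexOn ℝ s φ) {x y : ℝ} (hx : x ∈ s) (hy : y ∈ s)
    (hderiv : HasDerivWithinAt φ (φ' y) s y) : 0 ≤ breg φ φ' x y := by
  unfold breg
  rcases lt_trichotomy x y with hxy | rfl | hyx
  · have hslope := hconv.slope_le_of_hasDerivWithinAt hx hy hxy hderiv
    rw [slope_def_field, div_le_iff₀ (sub_pos.2 hxy)] at hslope
    linarith
  · simp
  · have hslope := hconv.le_slope_of_hasDerivWithinAt hy hx hyx hderiv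
    rw [slope_def_field, le_div_iff₀ (sub_pos.2 hyx)] at hslope
    linarith

theorem monotoneOn_of_convexOn_of_hasDerivWithinAt (hconv : ConvexOn ℝ s φ)
    (hderiv : ∀ x ∈ s, HasDerivWithinAt φ (φ' x) s x) : MonotoneOn φ' s := by
  intro x hx y hy hxy
  rcases hxy.eq_or_lt with rfl | hlt
  · exact le_rfl
  · exact (hconv.le_slope_of_hasDerivWithinAt hx hy hlt (hderiv x hx)).trans
      (hconv.slope_le_of_hasDerivWithinAt hx hy hlt (hderiv y hy))

end Convex

theorem le_of_forall_exchange_le {α β : Type*} [DecidableEq α] [Preorder β] {F : Finset α → β}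
    {S T : Finset α} (hcard : S.card = T.card)
    (hF : ∀ U, ∀ i ∈ S \ U, ∀ j ∈ U \ S, F (insert i (U.erase j)) ≤ F U) : F S ≤ F T := by
  induction hn : (T \ S).card generalizing T with
  | zero =>
    have hTS : T ⊆ S := Finset.sdiff_eq_empty_iff_subset.1 (Finset.card_eq_zero.1 hn)
    rw [Finset.eq_of_subset_of_card_le hTS hcard.le]
  | succ n ih =>
    obtain ⟨j, hj⟩ : (T \ S).Nonempty := Finset.card_pos.1 (by omega)
    obtain ⟨i, hi⟩ : (S \ T).Nonempty :=
      Finset.card_pos.1 (by rw [Finset.card_sdiff_comm hcard]; omega)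
    obtain ⟨hiS, hiT⟩ := Finset.mem_sdiff.1 hi
    have hcard' : S.card = (insert i (T.erase j)).card := by
      rw [Finset.card_insert_of_notMem (Finset.notMem_mono (T.erase_subset j) hiT),
        Finset.card_erase_add_one (Finset.mem_sdiff.1 hj).1, hcard]
    have hdiff : (insert i (T.erase j) \ S).card = n := by
      rw [Finset.insert_sdiff_of_mem _ hiS, Finset.erase_sdiff_comm, Finset.card_erase_of_mem hj,
        hn, Nat.add_sub_cancel]
    exact (ih hcard' hdiff).trans (hF T i hi j hj)

section Objective

variable {ι : Type*} [Fintype ι] [DecidableEq ι]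

/-- The objective minimized in `primalLoss`, at a fixed support `S` and a fixed vector `q`; the
entries of `q` outside `S` are irrelevant. -/
noncomputable def supportObjective (φ φ' : ℝ → ℝ) (p : ι → ℝ) (S : Finset ι) (q : ι → ℝ) : ℝ :=
  (∑ i ∈ S, breg φ φ' (q i) (p i)) + ∑ i ∈ Sᶜ, breg φ φ' 0 (p i)

theorem supportObjective_eq_sum_add_sum_univ (φ φ' : ℝ → ℝ) (p : ι → ℝ) (S : Finset ι)
    (q : ι → ℝ) :
    supportObjective φ φ' p S q =
      (∑ i ∈ S, (φ (q i) - φ 0 - φ' (p i) * q i)) + ∑ i, breg φ φ' 0 (p i) := by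
  have hbreg (i : ι) : breg φ φ' (q i) (p i) =
      (φ (q i) - φ 0 - φ' (p i) * q i) + breg φ φ' 0 (p i) := by
    unfold breg
    ring
  simp only [supportObjective, hbreg, Finset.sum_add_distrib, add_assoc, Finset.sum_add_sum_compl]

theorem supportObjective_exchange_le {φ φ' : ℝ → ℝ} {p q : ι → ℝ} {T : Finset ι} {i j : ι}
    (hi : i ∉ T) (hj : j ∈ T) (hφ' : φ' (p j) ≤ φ' (p i)) (hq : 0 ≤ q j) :
    supportObjective φ φ' p (insert i (T.erase j)) (Function.update q i (q j)) ≤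
      supportObjective φ φ' p T q := by
  have hi' : i ∉ T.erase j := Finset.notMem_mono (T.erase_subset j) hi
  have hrest : ∑ t ∈ T.erase j, (φ (Function.update q i (q j) t) - φ 0 -
      φ' (p t) * Function.update q i (q j) t) =
      ∑ t ∈ T.erase j, (φ (q t) - φ 0 - φ' (p t) * q t) :=
    Finset.sum_congr rfl fun t ht => by
      rw [Function.update_of_ne (ne_of_mem_of_not_mem ht hi')]
  rw [supportObjective_eq_sum_add_sum_univ, supportObjective_eq_sum_add_sum_univ,
    Finset.sum_insert hi', ← Finset.add_sum_erase T _ hj, hrest, Function.update_self]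
  gcongr

theorem supportObjective_nonneg {φ φ' : ℝ → ℝ} {s : Set ℝ} {p q : ι → ℝ} {S : Finset ι}
    (hconv : ConvexOn ℝ s φ) (hderiv : ∀ x ∈ s, HasDerivWithinAt φ (φ' x) s x) (h0 : 0 ∈ s)
    (hp : ∀ i, p i ∈ s) (hq : ∀ i ∈ S, q i ∈ s) : 0 ≤ supportObjective φ φ' p S q :=
  add_nonneg
    (Finset.sum_nonneg fun i hi => breg_nonneg hconv (hq i hi) (hp i) (hderiv _ (hp i)))
    (Finset.sum_nonneg fun i _ => breg_nonneg hconv h0 (hp i) (hderiv _ (hp i)))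

end Objective

section Loss

variable {V : ℕ} {φ φ' : ℝ → ℝ} {p : Fin V → ℝ}

theorem le_primalLoss {S : Finset (Fin V)} {r : ℝ} (hS : S.Nonempty)
    (hr : ∀ q : Fin V → ℝ, (∀ i, q i ∈ Set.Icc (0 : ℝ) 1) → ∑ i ∈ S, q i = 1 →
      r ≤ supportObjective φ φ' p S q) :
    r ≤ primalLoss φ φ' p S := by
  refine le_csInf ?_ ?_
  · obtain ⟨a, ha⟩ := hS
    refine ⟨_, Pi.single a 1, fun i => ?_, by simp [ha], rfl⟩
    rcases eq_or_ne i a with rfl | hia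
    · simp
    · simp [hia]
  · rintro _ ⟨q, hq, hsum, rfl⟩
    exact hr q hq hsum

theorem primalLoss_le {S : Finset (Fin V)} {q : Fin V → ℝ}
    (hconv : ConvexOn ℝ (Set.Icc 0 1) φ)
    (hderiv : ∀ x ∈ Set.Icc (0 : ℝ) 1, HasDerivWithinAt φ (φ' x) (Set.Icc 0 1) x)
    (hp : ∀ i, p i ∈ Set.Icc (0 : ℝ) 1)
    (hq : ∀ i, q i ∈ Set.Icc (0 : ℝ) 1) (hsum : ∑ i ∈ S, q i = 1) :
    primalLoss φ φ' p S ≤ supportObjective φ φ' p S q := by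
  refine csInf_le ⟨0, ?_⟩ ⟨q, hq, hsum, rfl⟩
  rintro _ ⟨q', hq', -, rfl⟩
  exact supportObjective_nonneg hconv hderiv (Set.left_mem_Icc.2 zero_le_one) hp fun i _ => hq' i

theorem primalLoss_exchange_le {T : Finset (Fin V)} {i j : Fin V}
    (hconv : ConvexOn ℝ (Set.Icc 0 1) φ)
    (hderiv : ∀ x ∈ Set.Icc (0 : ℝ) 1, HasDerivWithinAt φ (φ' x) (Set.Icc 0 1) x)
    (hp : ∀ i, p i ∈ Set.Icc (0 : ℝ) 1)
    (hi : i ∉ T) (hj : j ∈ T) (hij : p j ≤ p i) :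
    primalLoss φ φ' p (insert i (T.erase j)) ≤ primalLoss φ φ' p T := by
  refine le_primalLoss ⟨j, hj⟩ fun q hq hsum => ?_
  have hq' : ∀ t, Function.update q i (q j) t ∈ Set.Icc (0 : ℝ) 1 :=
    (Function.forall_update_iff q fun _ x => x ∈ Set.Icc (0 : ℝ) 1).2 ⟨hq j, fun t _ => hq t⟩
  have hi' : i ∉ T.erase j := Finset.notMem_mono (T.erase_subset j) hi
  have hsum' : ∑ t ∈ insert i (T.erase j), Function.update q i (q j) t = 1 := by
    rw [Finset.sum_insert hi', Function.update_self, Finset.sum_update_of_notMem hi',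
      Finset.add_sum_erase T q hj, hsum]
  have hφ' : φ' (p j) ≤ φ' (p i) :=
    monotoneOn_of_convexOn_of_hasDerivWithinAt hconv hderiv (hp j) (hp i) hij
  exact (primalLoss_le hconv hderiv hp hq' hsum').trans
    (supportObjective_exchange_le hi hj hφ' (hq j).1)

theorem primal_bregman_decoding_is_greedy_general {S T : Finset (Fin V)}
    (hconv : ConvexOn ℝ (Set.Icc 0 1) φ)
    (hderiv : ∀ x ∈ Set.Icc (0 : ℝ) 1, HasDerivWithinAt φ (φ' x) (Set.Icc 0 1) x)
    (hp : ∀ i, p i ∈ Set.Icc (0 : ℝ) 1)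
    (hcard : S.card = T.card) (hlargest : ∀ i ∈ S, ∀ j ∉ S, p j ≤ p i) :
    primalLoss φ φ' p S ≤ primalLoss φ φ' p T := by
  refine le_of_forall_exchange_le hcard fun U i hi j hj => ?_
  obtain ⟨hiS, hiU⟩ := Finset.mem_sdiff.1 hi
  obtain ⟨hjU, hjS⟩ := Finset.mem_sdiff.1 hj
  exact primalLoss_exchange_le hconv hderiv hp hiU hjU (hlargest i hiS j hjS)

end Loss

/-- Primal Bregman decoding is greedy. For a primal valid `φ` and `p ∈ Δ_V`
sorted in non-increasing order, the set `{1,…,k}` of the `k` largest entries of `p`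
minimizes the primal support loss among all supports of size `k`. -/
theorem primal_bregman_decoding_is_greedy
    (V k : ℕ) (hV : 1 ≤ V) (hk : 1 ≤ k)
    (p : Fin V → ℝ) (hp0 : ∀ i, p i ∈ Set.Icc (0:ℝ) 1) (hp1 : (∑ i, p i) = 1)
    (hsorted : ∀ i j : Fin V, i ≤ j → p j ≤ p i)
    (φ φ' : ℝ → ℝ)
    (hconv : ConvexOn ℝ (Set.Icc 0 1) φ)
    (hderiv : ∀ x ∈ Set.Icc (0:ℝ) 1, HasDerivWithinAt φ (φ' x) (Set.Icc 0 1) x)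
    (hcont : ContinuousOn φ' (Set.Icc 0 1))
    (hstrict : StrictConvexOn ℝ (Set.Ioo 0 1) φ)
    (S' : Finset (Fin V)) (hcard : S'.card = k) :
    primalLoss φ φ' p (Finset.univ.filter (fun i => (i : ℕ) < k)) ≤ primalLoss φ φ' p S' := by
  have hcard_lt : (Finset.univ.filter fun i : Fin V => (i : ℕ) < k).card = S'.card := by
    rw [Fin.card_filter_val_lt, hcard, min_eq_right (hcard ▸ card_finset_fin_le S')]
  exact primal_bregman_decoding_is_greedy_general hconv hderiv hp0 hcard_lt
    fun i hi j hj => hsorted i j (by grind)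
end

section
/- Let V ≥ 1, let p ∈ Δ_V have entries sorted in non-increasing order, and let φ : [0,1] → ℝ be dual valid, continuously differentiable on [0,1] with φ'(0) = 0, and suppose the derivative φ' is convex on [0,1]. For a subset Q = {i₁,…,i_k} ⊆ {1,…,V} of size k, define the dual support loss L*(Q) = min_{q ∈ Δ_k} [ Σ_{j=1}^k d_φ(p_{i_j}, q_j) + Σ_{i ∉ Q} d_φ(p_i, 0) ]. Then for every subset S' ⊆ {1,…,V} of size k, L*(S') ≥ L*({1,…,k}); that is, the set of the k largest entries of p minimizes the dual Bregman decoding loss among all supports of size k. -/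
/-!
For fixed weights `q`, the entries of `p` enter the cost of a support `S`, up to the constant
`∑ i, d_φ(p i, 0)`, only through the terms `-(φ' (q i) - φ' 0) * p i` with `i ∈ S`. When `φ'` is
smallest at `0`, each of these terms decreases as `p i` grows, so moving the weights of any other
support of the same size onto the largest entries, one by one, cannot increase the cost.

Dual validity makes `φ'` smallest at `0`: the derivative `y * φ'' y` of the convex function
`y ↦ d_φ(0, y)` is monotone and tends to `0` at `0⁺`, so `φ'' ≥ 0`.
-/

open Finset Set Filter

/-- The dual support loss `L*(Q)`: the infimum, over probability vectors `q`
supported (and summing to one) on `Q`, of the dual Bregman objective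
`Σ_{i∈Q} d_φ(p_i, q_i) + Σ_{i∉Q} d_φ(p_i, 0)`. -/
noncomputable def dualLoss {V : ℕ} (φ φ' : ℝ → ℝ) (p : Fin V → ℝ) (S : Finset (Fin V)) : ℝ :=
  sInf {r : ℝ | ∃ q : Fin V → ℝ, (∀ i, q i ∈ Set.Icc (0:ℝ) 1) ∧ ((∑ i ∈ S, q i) = 1) ∧
    r = (∑ i ∈ S, breg φ φ' (p i) (q i)) + ∑ i ∈ Sᶜ, breg φ φ' (p i) 0}

open scoped Topology

lemma le_deriv_of_convexOn_of_tendsto {f f' : ℝ → ℝ} {a b l : ℝ} (hf : ConvexOn ℝ (Set.Ioc a b) f)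
    (hf' : ∀ t ∈ Set.Ioc a b, HasDerivWithinAt f (f' t) (Set.Ioc a b) t)
    (hlim : Tendsto f' (𝓝[>] a) (𝓝 l)) {y : ℝ} (hy : y ∈ Set.Ioc a b) : l ≤ f' y := by
  refine le_of_tendsto hlim ?_
  filter_upwards [Ioo_mem_nhdsGT hy.1] with x hx
  have hx' : x ∈ Set.Ioc a b := ⟨hx.1, hx.2.le.trans hy.2⟩
  exact (hf.le_slope_of_hasDerivWithinAt hx' hy hx.2 (hf' x hx')).trans
    (hf.slope_le_of_hasDerivWithinAt hx' hy hx.2 (hf' y hy))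

section Bregman

variable {φ φ' : ℝ → ℝ}

lemma continuousOn_breg {s : Set ℝ} (hφ : ContinuousOn φ s) (hφ' : ContinuousOn φ' s) (x : ℝ) :
    ContinuousOn (breg φ φ' x) s :=
  (continuousOn_const.sub hφ).sub (hφ'.mul (continuousOn_const.sub continuousOn_id))

lemma hasDerivWithinAt_breg {s : Set ℝ} {y c : ℝ} (hφ : HasDerivWithinAt φ (φ' y) s y)
    (hφ' : HasDerivWithinAt φ' c s y) (x : ℝ) :
    HasDerivWithinAt (breg φ φ' x) ((y - x) * c) s y := by
  have h := (hφ.const_sub (φ x)).sub (hφ'.mul ((hasDerivWithinAt_id y s).const_sub x))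
  exact h.congr_deriv (by simp only [id]; ring)

lemma antitone_breg_sub_breg {y z : ℝ} (h : φ' z ≤ φ' y) :
    Antitone fun x ↦ breg φ φ' x y - breg φ φ' x z := by
  intro x₁ x₂ hx
  have hmul := mul_le_mul_of_nonneg_left hx (sub_nonneg.2 h)
  simp only [breg]
  linarith

lemma monotoneOn_deriv_of_convexOn_breg {φ'' : ℝ → ℝ} {a b : ℝ}
    (hφ : ∀ t ∈ Set.Ioc a b, HasDerivWithinAt φ (φ' t) (Set.Ioc a b) t)
    (hφ' : ∀ t ∈ Set.Ioc a b, HasDerivWithinAt φ' (φ'' t) (Set.Ioc a b) t)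
    (hcont : ContinuousOn φ' (Set.Icc a b)) (hconv : ConvexOn ℝ (Set.Ioc a b) (breg φ φ' a))
    (hlim : Tendsto (fun t ↦ (t - a) * φ'' t) (𝓝[>] a) (𝓝 0)) :
    MonotoneOn φ' (Set.Icc a b) := by
  have hφ''_nonneg : ∀ t ∈ Set.Ioc a b, 0 ≤ φ'' t := fun t ht ↦
    nonneg_of_mul_nonneg_right
      (le_deriv_of_convexOn_of_tendsto hconv
        (fun u hu ↦ hasDerivWithinAt_breg (hφ u hu) (hφ' u hu) a) hlim ht)
      (sub_pos.2 ht.1)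
  refine monotoneOn_of_hasDerivWithinAt_nonneg (f' := φ'') (convex_Icc a b) hcont ?_ ?_ <;>
    rw [interior_Icc]
  · exact fun t ht ↦ (hφ' t (Ioo_subset_Ioc_self ht)).mono Ioo_subset_Ioc_self
  · exact fun t ht ↦ hφ''_nonneg t (Ioo_subset_Ioc_self ht)

end Bregman

section Permutation

variable {α : Type*} {S T : Finset α}

lemma exists_perm_map_eq_of_card_eq (h : #S = #T) :
    ∃ σ : Equiv.Perm α, S.map σ.toEmbedding = T ∧ ∀ i ∈ S, i ∈ T → σ i = i := by
  classical
  obtain ⟨e, he⟩ : ∃ e : S ≃ T, ∀ i ∈ univ.filter (fun i : S ↦ (i : α) ∈ T), (e i : α) = i :=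
    Finset.exists_equiv_extend_of_card_eq (by simpa using h)
      (fun j hj ↦ by
        obtain ⟨i, hi, rfl⟩ := Finset.mem_image.1 hj
        exact (Finset.mem_filter.1 hi).2)
      Subtype.val_injective.injOn
  obtain ⟨σ, hσ⟩ := Equiv.Perm.exists_extending_pair (fun i : S ↦ (i : α)) (fun i ↦ (e i : α))
    Subtype.val_injective (Subtype.val_injective.comp e.injective)
  refine ⟨σ, Finset.eq_of_subset_of_card_le (fun j hj ↦ ?_) (by simp [h]), fun i hiS hiT ↦ ?_⟩
  · obtain ⟨i, hi, rfl⟩ := Finset.mem_map.1 hj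
    exact hσ ⟨i, hi⟩ ▸ (e ⟨i, hi⟩).2
  · exact (hσ ⟨i, hiS⟩).trans (he ⟨i, hiS⟩ (by simpa using hiT))

lemma exists_perm_map_eq_forall_le {β : Type*} [Preorder β] {f : α → β} (h : #S = #T)
    (hf : ∀ i ∈ S, ∀ j ∉ S, f j ≤ f i) :
    ∃ σ : Equiv.Perm α, S.map σ.toEmbedding = T ∧ ∀ i ∈ S, f (σ i) ≤ f i := by
  obtain ⟨σ, hST, hfix⟩ := exists_perm_map_eq_of_card_eq h
  refine ⟨σ, hST, fun i hi ↦ ?_⟩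
  by_cases hσi : σ i ∈ S
  · have hσiT : σ i ∈ T := hST ▸ Finset.mem_map_of_mem σ.toEmbedding hi
    have hσ_fix : σ i = i := σ.injective (hfix (σ i) hσi hσiT)
    rw [hσ_fix]
  · exact hf i hi (σ i) hσi

end Permutation

section Cost

variable {ι : Type*} {φ φ' : ℝ → ℝ} {p q : ι → ℝ} {S : Finset ι}

/-- The weights feasible for the support `S` in `dualLoss`: the entries in `S` form a probability
vector, while those off `S` are irrelevant and only required to lie in `[0, 1]`. -/
def supportWeights (S : Finset ι) : Set (ι → ℝ) :=
  {q | (∀ i, q i ∈ Set.Icc (0 : ℝ) 1) ∧ ∑ i ∈ S, q i = 1}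

lemma supportWeights_nonempty (hS : S.Nonempty) : (supportWeights S).Nonempty := by
  classical
  obtain ⟨a, ha⟩ := hS
  refine ⟨Pi.single a 1, fun i ↦ ?_, by simp [ha]⟩
  by_cases hi : i = a <;> simp [hi]

lemma comp_perm_mem_supportWeights (σ : Equiv.Perm ι)
    (hq : q ∈ supportWeights (S.map σ.toEmbedding)) : q ∘ σ ∈ supportWeights S :=
  ⟨fun i ↦ hq.1 (σ i), by simpa using hq.2⟩

variable [Fintype ι] [DecidableEq ι]

/-- The dual Bregman objective of the support `S` and the weights `q`, which `dualLoss` minimizes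
over `q`. -/
noncomputable def dualCost (φ φ' : ℝ → ℝ) (p : ι → ℝ) (S : Finset ι) (q : ι → ℝ) : ℝ :=
  ∑ i ∈ S, breg φ φ' (p i) (q i) + ∑ i ∈ Sᶜ, breg φ φ' (p i) 0

lemma dualLoss_eq_sInf_image {V : ℕ} (φ φ' : ℝ → ℝ) (p : Fin V → ℝ) (S : Finset (Fin V)) :
    dualLoss φ φ' p S = sInf (dualCost φ φ' p S '' supportWeights S) := by
  simp only [dualLoss, dualCost, supportWeights, Set.image, Set.mem_ofPred_eq, and_assoc, eq_comm]

lemma dualCost_eq_sum_sub_add (φ φ' : ℝ → ℝ) (p : ι → ℝ) (S : Finset ι) (q : ι → ℝ) :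
    dualCost φ φ' p S q =
      ∑ i ∈ S, (breg φ φ' (p i) (q i) - breg φ φ' (p i) 0) + ∑ i, breg φ φ' (p i) 0 := by
  rw [dualCost, Finset.sum_sub_distrib, ← Finset.sum_add_sum_compl S fun i ↦ breg φ φ' (p i) 0]
  ring

lemma continuousOn_dualCost {s : Set ℝ} (hφ : ContinuousOn φ s) (hφ' : ContinuousOn φ' s)
    (p : ι → ℝ) (S : Finset ι) :
    ContinuousOn (dualCost φ φ' p S) (Set.univ.pi fun _ ↦ s) := by
  refine (continuousOn_finsetSum S fun i _ ↦ ?_).add continuousOn_const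
  exact (continuousOn_breg hφ hφ' (p i)).comp (continuous_apply i).continuousOn
    fun _ hq ↦ hq i (Set.mem_univ i)

lemma bddBelow_dualCost_image (hφ : ContinuousOn φ (Set.Icc 0 1))
    (hφ' : ContinuousOn φ' (Set.Icc 0 1)) (p : ι → ℝ) (S : Finset ι) :
    BddBelow (dualCost φ φ' p S '' supportWeights S) := by
  have hsub : supportWeights S ⊆ Set.univ.pi fun _ ↦ Set.Icc 0 1 := fun _ hq i _ ↦ hq.1 i
  exact ((isCompact_univ_pi fun _ ↦ isCompact_Icc).bddBelow_image
    (continuousOn_dualCost hφ hφ' p S)).mono (Set.image_mono hsub)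

lemma dualCost_comp_perm_le (σ : Equiv.Perm ι) (hσ : ∀ i ∈ S, p (σ i) ≤ p i)
    (hq : ∀ i, φ' 0 ≤ φ' (q i)) :
    dualCost φ φ' p S (q ∘ σ) ≤ dualCost φ φ' p (S.map σ.toEmbedding) q := by
  rw [dualCost_eq_sum_sub_add, dualCost_eq_sum_sub_add, Finset.sum_map]
  gcongr ?_ + _
  exact Finset.sum_le_sum fun i hi ↦ antitone_breg_sub_breg (hq (σ i)) (hσ i hi)

end Cost

theorem dual_bregman_decoding_is_greedy_convex_deriv_general
    {V : ℕ} {p : Fin V → ℝ} {φ φ' : ℝ → ℝ}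
    (hφ : ∀ t ∈ Set.Icc (0 : ℝ) 1, HasDerivWithinAt φ (φ' t) (Set.Icc 0 1) t)
    (hφ' : ContinuousOn φ' (Set.Icc 0 1)) (hmin : IsMinOn φ' (Set.Icc 0 1) 0)
    {S S' : Finset (Fin V)} (hS' : S'.Nonempty) (hcard : #S = #S')
    (htop : ∀ i ∈ S, ∀ j ∉ S, p j ≤ p i) :
    dualLoss φ φ' p S ≤ dualLoss φ φ' p S' := by
  obtain ⟨σ, rfl, hσ⟩ := exists_perm_map_eq_forall_le hcard htop
  have hφ_cont : ContinuousOn φ (Set.Icc 0 1) := HasDerivWithinAt.continuousOn hφ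
  rw [dualLoss_eq_sInf_image, dualLoss_eq_sInf_image]
  refine le_csInf ((supportWeights_nonempty hS').image _) ?_
  rintro _ ⟨q, hq, rfl⟩
  calc sInf (dualCost φ φ' p S '' supportWeights S)
      ≤ dualCost φ φ' p S (q ∘ σ) :=
        csInf_le (bddBelow_dualCost_image hφ_cont hφ' p S)
          (Set.mem_image_of_mem _ (comp_perm_mem_supportWeights σ hq))
    _ ≤ dualCost φ φ' p (S.map σ.toEmbedding) q :=
        dualCost_comp_perm_le σ hσ fun i ↦ hmin (hq.1 i)

/-- Dual Bregman decoding is greedy under convexity of `φ'`.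
Here `φ` is dual valid (thrice differentiable on `(0,1]`, `x·φ''(x) → 0` as `x → 0⁺`,
`y ↦ d_φ(x,y)` strictly convex on `[x,1]` for `x ∈ (0,1]`, and `y ↦ d_φ(0,y)` strictly
convex on `(0,1]`), continuously differentiable on `[0,1]` with `φ'(0) = 0`, and `φ'`
is convex on `[0,1]`. Then the top-`k` support minimizes the dual support loss. -/
theorem dual_bregman_decoding_is_greedy_convex_deriv
    (V k : ℕ) (hV : 1 ≤ V) (hk : 1 ≤ k)
    (p : Fin V → ℝ) (hp0 : ∀ i, p i ∈ Set.Icc (0:ℝ) 1) (hp1 : (∑ i, p i) = 1)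
    (hsorted : ∀ i j : Fin V, i ≤ j → p j ≤ p i)
    (φ φ' φ'' φ''' : ℝ → ℝ)
    (hd1 : ∀ t ∈ Set.Ioc (0:ℝ) 1, HasDerivWithinAt φ (φ' t) (Set.Ioc 0 1) t)
    (hd2 : ∀ t ∈ Set.Ioc (0:ℝ) 1, HasDerivWithinAt φ' (φ'' t) (Set.Ioc 0 1) t)
    (hd3 : ∀ t ∈ Set.Ioc (0:ℝ) 1, HasDerivWithinAt φ'' (φ''' t) (Set.Ioc 0 1) t)
    (hlim : Filter.Tendsto (fun t => t * φ'' t) (nhdsWithin 0 (Set.Ioi 0)) (nhds 0))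
    (hsc1 : ∀ t ∈ Set.Ioc (0:ℝ) 1, StrictConvexOn ℝ (Set.Icc t 1) (fun y => breg φ φ' t y))
    (hsc2 : StrictConvexOn ℝ (Set.Ioc 0 1) (fun y => breg φ φ' 0 y))
    (hC1 : ∀ t ∈ Set.Icc (0:ℝ) 1, HasDerivWithinAt φ (φ' t) (Set.Icc 0 1) t)
    (hC1cont : ContinuousOn φ' (Set.Icc 0 1))
    (hφ'0 : φ' 0 = 0)
    (hφ'conv : ConvexOn ℝ (Set.Icc 0 1) φ')
    (S' : Finset (Fin V)) (hcard : S'.card = k) :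
    dualLoss φ φ' p (Finset.univ.filter (fun i => (i : ℕ) < k)) ≤ dualLoss φ φ' p S' := by
  have hmono : MonotoneOn φ' (Set.Icc 0 1) :=
    monotoneOn_deriv_of_convexOn_breg hd1 hd2 hC1cont hsc2.convexOn (by simpa using hlim)
  have hmin : IsMinOn φ' (Set.Icc 0 1) 0 :=
    fun y hy ↦ hmono (Set.left_mem_Icc.2 zero_le_one) hy hy.1
  have hkV : k ≤ V := by simpa [hcard] using S'.card_le_univ
  exact dual_bregman_decoding_is_greedy_convex_deriv_general hC1 hC1cont hmin
    (Finset.card_pos.1 (by omega)) (by simp [hcard, Fin.card_filter_val_lt, hkV])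
    fun i hi j hj ↦ hsorted i j (by simp only [Finset.mem_filter_univ] at hi hj; omega)
end

section
/- Let V ≥ 3, let p ∈ Δ_V have entries sorted in non-increasing order, let φ be primal valid, and let λ ≥ 0. Define cost(k) = min_{q ∈ Δ_k} [ Σ_{j=1}^k d_φ(q_j, p_j) + Σ_{j=k+1}^V d_φ(0, p_j) ] + λk for k ∈ {1,…,V}. Then cost is discretely convex in k: for every k ∈ {2,…,V−1}, cost(k+1) − 2·cost(k) + cost(k−1) ≥ 0. -/
/-!
The loss of keeping a set `A` of coordinates is the minimum of a separable convex cost over the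
face of the simplex carried by `A`. Such a minimum is a supermodular function of `A`: if `u` is
carried by `A ∪ B` and `w` by `A ∩ B`, then `u + w = x + y` with `x` carried by `A`, `y` by `B`,
and every `x i` between `u i` and `w i`, so that convexity gives
`f i (x i) + f i (y i) ≤ f i (u i) + f i (w i)` coordinate by coordinate.

Let `A` consist of the top `k` coordinates and let `B` be `A` with its last coordinate replaced by
the next one. Then `A ∩ B` and `A ∪ B` are the top `k - 1` and the top `k + 1` coordinates. Since
`φ'` is monotone, keeping a coordinate of larger reference value is cheaper, so `A` costs at most as
much as `B`. Hence twice the loss of `A` is at most the sum of the losses at `k - 1` and `k + 1`.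
-/

open Finset Set Filter

/-- The unregularized primal loss of keeping the top-`n` coordinates `{0,…,n−1}` of `p`:
the infimum over probability vectors supported on the first `n` coordinates of
`Σ_{j<n} d_φ(q_j, p_j) + Σ_{j≥n} d_φ(0, p_j)`. -/
noncomputable def primalTopLoss {V : ℕ} (φ φ' : ℝ → ℝ) (p : Fin V → ℝ) (n : ℕ) : ℝ :=
  sInf {r : ℝ | ∃ q : Fin V → ℝ, (∀ i, q i ∈ Set.Icc (0:ℝ) 1) ∧
    ((∑ i ∈ Finset.univ.filter (fun i : Fin V => (i : ℕ) < n), q i) = 1) ∧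
    r = (∑ i ∈ Finset.univ.filter (fun i : Fin V => (i : ℕ) < n), breg φ φ' (q i) (p i)) +
        ∑ i ∈ Finset.univ.filter (fun i : Fin V => n ≤ (i : ℕ)), breg φ φ' 0 (p i)}

/-- The `ℓ₀`-regularized primal cost `cost(n) = min_{q ∈ Δ_n} D_φ((q,0),p) + λ·n`. -/
noncomputable def primalCost {V : ℕ} (φ φ' : ℝ → ℝ) (p : Fin V → ℝ) (lam : ℝ) (n : ℕ) : ℝ :=
  primalTopLoss φ φ' p n + lam * (n : ℝ)

section ConvexFunctions

variable {S : Set ℝ} {f : ℝ → ℝ}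

lemma add_le_add_of_convexOn_of_mem_segment (hf : ConvexOn ℝ S f) {u w x y : ℝ} (hu : u ∈ S)
    (hw : w ∈ S) (hx : x ∈ segment ℝ u w) (hxy : x + y = u + w) : f x + f y ≤ f u + f w := by
  obtain ⟨a, b, ha, hb, hab, rfl⟩ := hx
  obtain rfl : y = b • u + a • w := by
    simp only [smul_eq_mul] at hxy ⊢
    linear_combination hxy - (u + w) * hab
  calc f (a • u + b • w) + f (b • u + a • w)
      ≤ (a • f u + b • f w) + (b • f u + a • f w) :=
        add_le_add (hf.2 hu hw ha hb hab) (hf.2 hu hw hb ha (by rw [add_comm, hab]))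
    _ = f u + f w := by
        simp only [smul_eq_mul]
        linear_combination (f u + f w) * hab

lemma bddBelow_image_Icc_of_convexOn {a b : ℝ} (hf : ConvexOn ℝ (Set.Icc a b) f) :
    BddBelow (f '' Set.Icc a b) := by
  refine ⟨2 * f ((a + b) / 2) - max (f a) (f b), ?_⟩
  rintro _ ⟨x, hx, rfl⟩
  have hab : a ≤ b := hx.1.trans hx.2
  have hx' : a + b - x ∈ Set.Icc a b := ⟨by linarith [hx.2], by linarith [hx.1]⟩
  have upper : f (a + b - x) ≤ max (f a) (f b) :=
    hf.le_max_of_mem_Icc (left_mem_Icc.2 hab) (right_mem_Icc.2 hab) hx'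
  have midpoint : f ((a + b) / 2) + f ((a + b) / 2) ≤ f x + f (a + b - x) :=
    add_le_add_of_convexOn_of_mem_segment hf hx hx'
      ⟨1 / 2, 1 / 2, by norm_num, by norm_num, by norm_num, by simp only [smul_eq_mul]; ring⟩
      (by ring)
  linarith

lemma derivative_le_of_convexOn {f' : ℝ → ℝ} (hf : ConvexOn ℝ S f) {x y : ℝ} (hx : x ∈ S)
    (hy : y ∈ S) (hxy : x ≤ y) (hfx : HasDerivWithinAt f (f' x) S x)
    (hfy : HasDerivWithinAt f (f' y) S y) : f' x ≤ f' y := by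
  rcases hxy.eq_or_lt with rfl | hlt
  · exact le_rfl
  · exact (hf.le_slope_of_hasDerivWithinAt hx hy hlt hfx).trans
      (hf.slope_le_of_hasDerivWithinAt hx hy hlt hfy)

end ConvexFunctions

section SimplexFaces

variable {ι : Type*} [Fintype ι] {f : ι → ℝ → ℝ} {A B : Set ι}

/-- The face of the standard simplex carried by `A`: the probability vectors that vanish off `A`. -/
def simplexFace (A : Set ι) : Set (ι → ℝ) := {q ∈ stdSimplex ℝ ι | ∀ i ∉ A, q i = 0}

/-- The infimum of the separable cost `q ↦ ∑ i, f i (q i)` over the face of the simplex carried by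
`A`. It has the junk value `0` if `A` is empty or the cost is not bounded below there. -/
noncomputable def faceInf (f : ι → ℝ → ℝ) (A : Set ι) : ℝ :=
  ⨅ q : simplexFace A, ∑ i, f i (q.1 i)

lemma simplexFace_nonempty (hA : A.Nonempty) : (simplexFace A).Nonempty := by
  classical
  obtain ⟨a, ha⟩ := hA
  exact ⟨Pi.single a 1, single_mem_stdSimplex ℝ a,
    fun i hi => Pi.single_eq_of_ne (ne_of_mem_of_not_mem ha hi).symm 1⟩

lemma faceInf_le (hf : ∀ i, ConvexOn ℝ (Set.Icc 0 1) (f i)) {q : ι → ℝ} (hq : q ∈ simplexFace A) :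
    faceInf f A ≤ ∑ i, f i (q i) := by
  choose c hc using fun i => bddBelow_image_Icc_of_convexOn (hf i)
  refine ciInf_le ⟨∑ i, c i, ?_⟩ (⟨q, hq⟩ : simplexFace A)
  rintro _ ⟨r, rfl⟩
  exact Finset.sum_le_sum fun i _ =>
    hc i (Set.mem_image_of_mem _ (mem_Icc_of_mem_stdSimplex r.2.1 i))

lemma exists_mem_simplexFace_mem_segment {u w : ι → ℝ} (hu : u ∈ simplexFace (A ∪ B))
    (hw : w ∈ simplexFace (A ∩ B)) :
    ∃ x ∈ simplexFace A, (∀ i ∉ B, x i = u i) ∧ ∀ i, x i ∈ segment ℝ (u i) (w i) := by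
  obtain ⟨⟨hu0, hu1⟩, hu⟩ := hu
  obtain ⟨⟨hw0, hw1⟩, hw⟩ := hw
  have hAB_le : ∑ i, (A ∩ B).indicator u i ≤ ∑ i, A.indicator u i :=
    Finset.sum_le_sum fun i _ => Set.indicator_le_indicator_of_subset Set.inter_subset_left hu0 i
  have hA_le : ∑ i, A.indicator u i ≤ 1 :=
    hu1 ▸ Finset.sum_le_sum fun i _ => Set.indicator_le_self' (fun _ _ => hu0 _) i
  -- The equation for `t` gives mass `1` to `(1 - t) u + t w` on `A ∩ B` extended by `u` on `A \ B`.
  obtain ⟨t, ht0, ht1, ht⟩ : ∃ t : ℝ, 0 ≤ t ∧ t ≤ 1 ∧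
      t * (1 - ∑ i, (A ∩ B).indicator u i) = 1 - ∑ i, A.indicator u i :=
    ⟨_, div_nonneg (by linarith) (by linarith), div_le_one_of_le₀ (by linarith) (by linarith),
      div_mul_cancel_of_imp fun _ => by linarith⟩
  let x : ι → ℝ := fun i => A.indicator u i + t * (w i - (A ∩ B).indicator u i)
  have hx1 : ∑ i, x i = 1 := by
    simp only [x, Finset.sum_add_distrib, ← Finset.mul_sum, Finset.sum_sub_distrib, hw1, ht,
      add_sub_cancel]
  have hxA : ∀ i ∉ A, x i = 0 := fun i hi => by simp [x, hi, hw]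
  have hxB : ∀ i ∉ B, x i = u i := fun i hi => by
    by_cases hA : i ∈ A <;> simp [x, hi, hA, hw, hu]
  have hxAB : ∀ i ∈ A ∩ B, x i = AffineMap.lineMap (u i) (w i) t := fun i hi => by
    simp only [x, Set.indicator_of_mem hi, Set.indicator_of_mem hi.1, AffineMap.lineMap_apply_ring']
    ring
  have hseg : ∀ i, x i ∈ segment ℝ (u i) (w i) := fun i => by
    by_cases hB : i ∈ B
    · by_cases hA : i ∈ A
      · rw [hxAB i ⟨hA, hB⟩, segment_eq_image_lineMap]
        exact Set.mem_image_of_mem _ ⟨ht0, ht1⟩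
      · rw [hxA i hA, ← hw i fun h => hA h.1]
        exact right_mem_segment ℝ _ _
    · rw [hxB i hB]
      exact left_mem_segment ℝ _ _
  have hx0 : ∀ i, 0 ≤ x i := fun i =>
    (convex_Ici (0 : ℝ)).segment_subset (hu0 i) (hw0 i) (hseg i)
  exact ⟨x, ⟨⟨hx0, hx1⟩, hxA⟩, hxB, hseg⟩

lemma exists_add_eq_of_mem_simplexFace {u w : ι → ℝ} (hu : u ∈ simplexFace (A ∪ B))
    (hw : w ∈ simplexFace (A ∩ B)) :
    ∃ x ∈ simplexFace A, ∃ y ∈ simplexFace B,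
      x + y = u + w ∧ ∀ i, x i ∈ segment ℝ (u i) (w i) := by
  obtain ⟨x, hx, hxB, hseg⟩ := exists_mem_simplexFace_mem_segment hu hw
  have hx_le : ∀ i, x i ≤ u i + w i := fun i =>
    (segment_eq_uIcc (u i) (w i) ▸ hseg i).2.trans (max_le_add_of_nonneg (hu.1.1 i) (hw.1.1 i))
  have hy1 : ∑ i, (u + w - x) i = 1 := by
    simp only [Pi.sub_apply, Pi.add_apply, Finset.sum_sub_distrib, Finset.sum_add_distrib, hu.1.2,
      hw.1.2, hx.1.2, add_sub_cancel_right]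
  have hyB : ∀ i ∉ B, (u + w - x) i = 0 := fun i hi => by
    simp [hxB i hi, hw.2 i fun h => hi h.2]
  exact ⟨x, hx, u + w - x, ⟨⟨fun i => sub_nonneg.2 (hx_le i), hy1⟩, hyB⟩,
    add_sub_cancel x (u + w), hseg⟩

theorem faceInf_add_faceInf_le (hf : ∀ i, ConvexOn ℝ (Set.Icc 0 1) (f i))
    (hAB : (A ∩ B).Nonempty) :
    faceInf f A + faceInf f B ≤ faceInf f (A ∩ B) + faceInf f (A ∪ B) := by
  have : Nonempty (simplexFace (A ∩ B)) := (simplexFace_nonempty hAB).to_subtype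
  have : Nonempty (simplexFace (A ∪ B)) := (simplexFace_nonempty hAB.left.inl).to_subtype
  refine le_ciInf_add_ciInf fun w u => ?_
  obtain ⟨x, hx, y, hy, hxy, hseg⟩ := exists_add_eq_of_mem_simplexFace u.2 w.2
  calc faceInf f A + faceInf f B
      ≤ ∑ i, f i (x i) + ∑ i, f i (y i) := add_le_add (faceInf_le hf hx) (faceInf_le hf hy)
    _ = ∑ i, (f i (x i) + f i (y i)) := Finset.sum_add_distrib.symm
    _ ≤ ∑ i, (f i (u.1 i) + f i (w.1 i)) := Finset.sum_le_sum fun i _ =>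
        add_le_add_of_convexOn_of_mem_segment (hf i) (mem_Icc_of_mem_stdSimplex u.2.1 i)
          (mem_Icc_of_mem_stdSimplex w.2.1 i) (hseg i) (congrFun hxy i)
    _ = ∑ i, f i (w.1 i) + ∑ i, f i (u.1 i) := by rw [Finset.sum_add_distrib, add_comm]

theorem faceInf_image_le (hf : ∀ i, ConvexOn ℝ (Set.Icc 0 1) (f i)) (hA : A.Nonempty)
    (σ : Equiv.Perm ι)
    (hσ : ∀ i ∈ A, ∀ x ∈ Set.Icc (0 : ℝ) 1, f (σ i) x - f (σ i) 0 ≤ f i x - f i 0) :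
    faceInf f (σ '' A) ≤ faceInf f A := by
  have : Nonempty (simplexFace A) := (simplexFace_nonempty hA).to_subtype
  refine le_ciInf fun q => ?_
  obtain ⟨q, hq, hqA⟩ := q
  have hmem : q ∘ σ.symm ∈ simplexFace (σ '' A) :=
    ⟨⟨fun i => hq.1 _, (Equiv.sum_comp σ.symm q).trans hq.2⟩,
      fun i hi => hqA _ fun h => hi ⟨_, h, σ.apply_symm_apply i⟩⟩
  have hgain : ∑ i, (f (σ i) (q i) - f (σ i) 0) ≤ ∑ i, (f i (q i) - f i 0) := by
    refine Finset.sum_le_sum fun i _ => ?_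
    by_cases hi : i ∈ A
    · exact hσ i hi _ (mem_Icc_of_mem_stdSimplex hq i)
    · simp only [hqA i hi, sub_self, le_refl]
  have hreindex : ∑ i, f i (q (σ.symm i)) = ∑ i, f (σ i) (q i) := by
    rw [← Equiv.sum_comp σ]
    simp only [Equiv.symm_apply_apply]
  have hzero : ∑ i, f (σ i) 0 = ∑ i, f i 0 := Equiv.sum_comp σ fun i => f i 0
  rw [Finset.sum_sub_distrib, Finset.sum_sub_distrib, hzero, sub_le_sub_iff_right] at hgain
  exact (faceInf_le hf hmem).trans (hreindex.trans_le hgain)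

lemma faceInf_insert_le_faceInf_insert (hf : ∀ i, ConvexOn ℝ (Set.Icc 0 1) (f i)) {a b : ι}
    (ha : a ∉ A) (hb : b ∉ A)
    (hab : ∀ x ∈ Set.Icc (0 : ℝ) 1, f a x - f a 0 ≤ f b x - f b 0) :
    faceInf f (insert a A) ≤ faceInf f (insert b A) := by
  classical
  have hfix : ∀ i ∈ A, Equiv.swap a b i = i := fun i hi =>
    Equiv.swap_apply_of_ne_of_ne (ne_of_mem_of_not_mem hi ha) (ne_of_mem_of_not_mem hi hb)
  have himage : Equiv.swap a b '' insert b A = insert a A := by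
    rw [Set.image_insert_eq, Equiv.swap_apply_right, Set.image_congr hfix, Set.image_id']
  rw [← himage]
  refine faceInf_image_le hf (Set.insert_nonempty b A) _ fun i hi x hx => ?_
  rcases hi with rfl | hi
  · simpa only [Equiv.swap_apply_right] using hab x hx
  · rw [hfix i hi]

theorem two_mul_faceInf_insert_le (hf : ∀ i, ConvexOn ℝ (Set.Icc 0 1) (f i)) (hA : A.Nonempty)
    {a b : ι} (ha : a ∉ A) (hb : b ∉ A) (hne : a ≠ b)
    (hab : ∀ x ∈ Set.Icc (0 : ℝ) 1, f a x - f a 0 ≤ f b x - f b 0) :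
    2 * faceInf f (insert a A) ≤ faceInf f A + faceInf f (insert b (insert a A)) := by
  have hinter : insert a A ∩ insert b A = A := by
    rw [Set.insert_inter_of_notMem (by simp [hne, ha]), Set.inter_eq_left.2 (Set.subset_insert b A)]
  have hunion : insert a A ∪ insert b A = insert b (insert a A) := by
    rw [Set.union_insert, Set.union_eq_left.2 (Set.subset_insert a A)]
  have hsuper := faceInf_add_faceInf_le (A := insert a A) (B := insert b A) hf (by rwa [hinter])
  rw [hinter, hunion] at hsuper
  linarith [faceInf_insert_le_faceInf_insert hf ha hb hab]

end SimplexFaces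

section Bregman

variable {φ φ' : ℝ → ℝ}

lemma convexOn_breg_left {S : Set ℝ} (hφ : ConvexOn ℝ S φ) (y : ℝ) :
    ConvexOn ℝ S fun x => breg φ φ' x y := by
  refine ⟨hφ.1, fun u hu w hw a b ha hb hab => ?_⟩
  have hle := hφ.2 hu hw ha hb hab
  simp only [breg, smul_eq_mul] at hle ⊢
  linear_combination hle + (φ y - φ' y * y) * hab

lemma breg_sub_breg_le {x₀ x y z : ℝ} (hx : x₀ ≤ x) (hzy : φ' z ≤ φ' y) :
    breg φ φ' x y - breg φ φ' x₀ y ≤ breg φ φ' x z - breg φ φ' x₀ z := by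
  unfold breg
  linarith [mul_le_mul_of_nonneg_right hzy (sub_nonneg.2 hx)]

end Bregman

section TopCoordinates

variable {V : ℕ}

lemma setOf_val_lt_succ {m : ℕ} (hm : m < V) :
    {i : Fin V | (i : ℕ) < m + 1} = insert ⟨m, hm⟩ {i : Fin V | (i : ℕ) < m} := by
  ext i
  simp only [Set.mem_ofPred_eq, Set.mem_insert_iff, Fin.ext_iff]
  omega

lemma sum_filter_lt_add_sum_filter_ge (f : Fin V → ℝ → ℝ) (q : Fin V → ℝ) (n : ℕ) :
    ∑ i with i.val < n, f i (q i) + ∑ i with n ≤ i.val, f i 0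
      = ∑ i, f i ({i : Fin V | (i : ℕ) < n}.indicator q i) := by
  simp only [Set.indicator_apply, Set.mem_ofPred_eq, apply_ite (f _), Finset.sum_ite, not_lt]

lemma primalTopLoss_eq_faceInf (φ φ' : ℝ → ℝ) (p : Fin V → ℝ) (n : ℕ) :
    primalTopLoss φ φ' p n = faceInf (fun i x => breg φ φ' x (p i)) {i : Fin V | (i : ℕ) < n} := by
  have hcost := sum_filter_lt_add_sum_filter_ge (fun i x => breg φ φ' x (p i)) (n := n)
  have hmass (q : Fin V → ℝ) : ∑ i with i.val < n, q i
      = ∑ i, {i : Fin V | (i : ℕ) < n}.indicator q i := by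
    simpa only [Finset.sum_const_zero, add_zero] using
      sum_filter_lt_add_sum_filter_ge (fun _ x => x) q n
  refine congrArg sInf (Set.ext fun r => ⟨?_, ?_⟩)
  · rintro ⟨q, hq, hq1, rfl⟩
    exact ⟨⟨_, ⟨fun i => Set.indicator_nonneg (fun j _ => (hq j).1) i, (hmass q).symm.trans hq1⟩,
      fun i hi => Set.indicator_of_notMem hi q⟩, (hcost q).symm⟩
  · rintro ⟨⟨q, hq, hq0⟩, rfl⟩
    have hind : {i : Fin V | (i : ℕ) < n}.indicator q = q :=
      Set.indicator_eq_self.2 (Function.support_subset_iff'.2 hq0)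
    exact ⟨q, mem_Icc_of_mem_stdSimplex hq, by rw [hmass, hind, hq.2], by rw [hcost, hind]⟩

theorem two_mul_primalTopLoss_succ_le {φ φ' : ℝ → ℝ} {p : Fin V → ℝ} {m : ℕ}
    (hp0 : ∀ i, p i ∈ Set.Icc (0 : ℝ) 1) (hm0 : 0 < m) (hm : m + 1 < V)
    (hp : p ⟨m + 1, hm⟩ ≤ p ⟨m, by omega⟩)
    (hconv : ConvexOn ℝ (Set.Icc 0 1) φ)
    (hderiv : ∀ i, HasDerivWithinAt φ (φ' (p i)) (Set.Icc 0 1) (p i)) :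
    2 * primalTopLoss φ φ' p (m + 1) ≤ primalTopLoss φ φ' p m + primalTopLoss φ φ' p (m + 2) := by
  have hφ' : φ' (p ⟨m + 1, hm⟩) ≤ φ' (p ⟨m, by omega⟩) :=
    derivative_le_of_convexOn hconv (hp0 _) (hp0 _) hp (hderiv _) (hderiv _)
  simp only [primalTopLoss_eq_faceInf]
  rw [setOf_val_lt_succ hm, setOf_val_lt_succ (by omega : m < V)]
  exact two_mul_faceInf_insert_le (fun i => convexOn_breg_left hconv (p i))
    ⟨⟨0, by omega⟩, hm0⟩ (by simp) (by simp) (by simp)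
    fun x hx => breg_sub_breg_le hx.1 hφ'

end TopCoordinates

theorem primal_cost_discretely_convex_general {V : ℕ} {p : Fin V → ℝ} {φ φ' : ℝ → ℝ} {k : ℕ}
    (hp0 : ∀ i, p i ∈ Set.Icc (0 : ℝ) 1) (hk2 : 2 ≤ k) (hkV : k < V)
    (hp : p ⟨k, hkV⟩ ≤ p ⟨k - 1, by omega⟩) (hconv : ConvexOn ℝ (Set.Icc 0 1) φ)
    (hderiv : ∀ i, HasDerivWithinAt φ (φ' (p i)) (Set.Icc 0 1) (p i)) (lam : ℝ) :
    0 ≤ primalCost φ φ' p lam (k + 1) - 2 * primalCost φ φ' p lam k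
        + primalCost φ φ' p lam (k - 1) := by
  obtain ⟨m, rfl⟩ : ∃ m, k = m + 1 := ⟨k - 1, by omega⟩
  have hloss := two_mul_primalTopLoss_succ_le hp0 (by omega) hkV hp hconv hderiv
  simp only [primalCost, Nat.add_sub_cancel]
  push_cast
  linarith

/-- Discrete convexity of the primal cost. For `V ≥ 3`, `p ∈ Δ_V` sorted in
non-increasing order, a primal valid `φ`, and `λ ≥ 0`, the regularized cost satisfies
`cost(k+1) − 2·cost(k) + cost(k−1) ≥ 0` for every `k ∈ {2,…,V−1}`. -/
theorem primal_cost_discretely_convex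
    (V : ℕ) (hV : 3 ≤ V)
    (p : Fin V → ℝ) (hp0 : ∀ i, p i ∈ Set.Icc (0:ℝ) 1) (hp1 : (∑ i, p i) = 1)
    (hsorted : ∀ i j : Fin V, i ≤ j → p j ≤ p i)
    (φ φ' : ℝ → ℝ)
    (hconv : ConvexOn ℝ (Set.Icc 0 1) φ)
    (hderiv : ∀ x ∈ Set.Icc (0:ℝ) 1, HasDerivWithinAt φ (φ' x) (Set.Icc 0 1) x)
    (hcont : ContinuousOn φ' (Set.Icc 0 1))
    (hstrict : StrictConvexOn ℝ (Set.Ioo 0 1) φ)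
    (lam : ℝ) (hlam : 0 ≤ lam)
    (k : ℕ) (hk2 : 2 ≤ k) (hkV : k + 1 ≤ V) :
    0 ≤ primalCost φ φ' p lam (k + 1) - 2 * primalCost φ φ' p lam k
        + primalCost φ φ' p lam (k - 1) :=
  primal_cost_discretely_convex_general hp0 hk2 hkV
    (hsorted ⟨k - 1, by omega⟩ ⟨k, hkV⟩ (Nat.sub_le k 1)) hconv (fun i => hderiv _ (hp0 i)) lam
end

section
/- Let k ≥ 1 and let x ∈ [0,1]^k satisfy s := Σ_{j=1}^k x_j ≤ 1. Set r := Σ_{j=1}^k √(x_j) and ν := (√(r² + k·(1 − s)) − r)/k ≥ 0, and define q ∈ ℝ^k by qᵢ = (√(xᵢ) + ν)². Then q ∈ Δ_k (in particular Σᵢ qᵢ = 1), and q minimizes over Δ_k the separable Bregman divergence D_{φ_{3/2}}(q, x) = Σᵢ d_{φ_{3/2}}(qᵢ, xᵢ) generated by φ_{3/2}(t) = t^{3/2}/((3/2)(1/2)); that is, the primal Bregman 1.5-renormalization map is given in closed form by [T_{1.5}(x)]ᵢ = (√(xᵢ) + [√(r² + k(1 − s)) − r]/k)². -/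
/-!
The constant `ν` is the larger root of `k ν² + 2 r ν = 1 - s`, which is exactly the condition
`∑ (√xᵢ + ν)² = 1`. The point `qᵢ = (√xᵢ + ν)²` satisfies the Lagrange condition: the partial
derivative `φ'(qᵢ) - φ'(xᵢ) = 2ν` of the objective is the same in every coordinate. Hence the cross
term of the three-point identity cancels on points of equal total mass, leaving the Pythagorean
identity `D(w, x) = D(w, q) + D(q, x)`, where `D(w, q) ≥ 0` by convexity of `φ`.
-/

open Finset Set

/-- The probability simplex `Δ_k = {q ∈ [0,1]^k : Σ qᵢ = 1}`. -/
def probSimplex (k : ℕ) : Set (Fin k → ℝ) :=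
  {q | (∀ i, q i ∈ Set.Icc (0:ℝ) 1) ∧ (∑ i, q i) = 1}

/-- The `α = 3/2` entropy generator `φ_{3/2}(t) = t^{3/2}/((3/2)(1/2))`. -/
noncomputable def phi32 (t : ℝ) : ℝ := t ^ ((3:ℝ)/2) / ((3/2) * (1/2))

/-- Its derivative `φ_{3/2}'(t) = t^{1/2}/(1/2) = 2√t`. -/
noncomputable def phi32' (t : ℝ) : ℝ := 2 * Real.sqrt t

section Bregman

variable {φ φ' : ℝ → ℝ}

lemma breg_three_point (φ φ' : ℝ → ℝ) (w q x : ℝ) :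
    breg φ φ' w x = breg φ φ' w q + breg φ φ' q x + (φ' q - φ' x) * (w - q) := by
  unfold breg
  ring

lemma breg_nonneg_of_convexOn {S : Set ℝ} {x y : ℝ} (hφ : ConvexOn ℝ S φ) (hx : x ∈ S)
    (hy : y ∈ S) (hφ' : HasDerivWithinAt φ (φ' y) S y) : 0 ≤ breg φ φ' x y := by
  unfold breg
  rcases lt_trichotomy x y with hxy | rfl | hyx
  · have hslope := hφ.slope_le_of_hasDerivWithinAt hx hy hxy hφ'
    rw [slope_def_field, div_le_iff₀ (sub_pos.2 hxy)] at hslope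
    linarith
  · simp
  · have hslope := hφ.le_slope_of_hasDerivWithinAt hy hx hyx hφ'
    rw [slope_def_field, le_div_iff₀ (sub_pos.2 hyx)] at hslope
    linarith

variable {ι : Type*} {s : Finset ι} {w q x : ι → ℝ} {c : ℝ}

lemma sum_breg_eq_add_of_deriv_sub_eq_const (hc : ∀ i ∈ s, φ' (q i) - φ' (x i) = c)
    (hwq : ∑ i ∈ s, w i = ∑ i ∈ s, q i) :
    ∑ i ∈ s, breg φ φ' (w i) (x i) =
      ∑ i ∈ s, breg φ φ' (w i) (q i) + ∑ i ∈ s, breg φ φ' (q i) (x i) := by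
  have cross_term : ∑ i ∈ s, (φ' (q i) - φ' (x i)) * (w i - q i) = 0 := by
    rw [sum_congr rfl fun i hi => by rw [hc i hi], ← mul_sum, sum_sub_distrib, hwq, sub_self,
      mul_zero]
  rw [sum_congr rfl fun i _ => breg_three_point φ φ' (w i) (q i) (x i), sum_add_distrib,
    sum_add_distrib, cross_term, add_zero]

lemma sum_breg_le_of_deriv_sub_eq_const {S : Set ℝ} (hφ : ConvexOn ℝ S φ)
    (hw : ∀ i ∈ s, w i ∈ S) (hq : ∀ i ∈ s, q i ∈ S)
    (hφ' : ∀ i ∈ s, HasDerivWithinAt φ (φ' (q i)) S (q i))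
    (hc : ∀ i ∈ s, φ' (q i) - φ' (x i) = c) (hwq : ∑ i ∈ s, w i = ∑ i ∈ s, q i) :
    ∑ i ∈ s, breg φ φ' (q i) (x i) ≤ ∑ i ∈ s, breg φ φ' (w i) (x i) := by
  rw [sum_breg_eq_add_of_deriv_sub_eq_const hc hwq]
  exact le_add_of_nonneg_left <| sum_nonneg fun i hi =>
    breg_nonneg_of_convexOn hφ (hw i hi) (hq i hi) (hφ' i hi)

end Bregman

lemma convexOn_phi32 : ConvexOn ℝ (Ici 0) phi32 := by
  have hrpow : ConvexOn ℝ (Ici 0) fun t : ℝ => t ^ ((3 : ℝ) / 2) := convexOn_rpow (by norm_num)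
  refine (hrpow.smul (c := 4 / 3) (by norm_num)).congr fun t _ => ?_
  simp only [phi32, smul_eq_mul]
  ring

lemma hasDerivAt_phi32 (t : ℝ) : HasDerivAt phi32 (phi32' t) t := by
  have hrpow : HasDerivAt (fun u : ℝ => u ^ ((3 : ℝ) / 2)) (3 / 2 * t ^ ((3 : ℝ) / 2 - 1)) t :=
    Real.hasDerivAt_rpow_const (.inr (by norm_num))
  refine (hrpow.div_const (3 / 2 * (1 / 2))).congr_deriv ?_
  rw [phi32', Real.sqrt_eq_rpow, show (3 : ℝ) / 2 - 1 = 1 / 2 by norm_num]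
  ring

lemma phi32'_sqrt_add_sq_sub {x ν : ℝ} (h : 0 ≤ √x + ν) :
    phi32' ((√x + ν) ^ 2) - phi32' x = 2 * ν := by
  rw [phi32', phi32', Real.sqrt_sq h]
  ring

lemma sum_sqrt_add_sq {ι : Type*} {s : Finset ι} {x : ι → ℝ} (hx : ∀ i ∈ s, 0 ≤ x i) (ν : ℝ) :
    ∑ i ∈ s, (√(x i) + ν) ^ 2 = ∑ i ∈ s, x i + (#s * ν ^ 2 + 2 * (∑ i ∈ s, √(x i)) * ν) := by
  calc ∑ i ∈ s, (√(x i) + ν) ^ 2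
      = ∑ i ∈ s, (x i + (ν ^ 2 + 2 * √(x i) * ν)) :=
        sum_congr rfl fun i hi => by rw [add_sq', Real.sq_sqrt (hx i hi), add_assoc]
    _ = ∑ i ∈ s, x i + (#s * ν ^ 2 + 2 * (∑ i ∈ s, √(x i)) * ν) := by
        simp only [sum_add_distrib, sum_const, nsmul_eq_mul, ← sum_mul, ← mul_sum]

section QuadraticRoot

variable {a b c : ℝ}

lemma sqrt_sq_add_mul_sub_div_nonneg (ha : 0 ≤ a) (hc : 0 ≤ c) :
    0 ≤ (√(b ^ 2 + a * c) - b) / a :=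
  div_nonneg (sub_nonneg.2 <| Real.le_sqrt_of_sq_le <|
    le_add_of_nonneg_right <| mul_nonneg ha hc) ha

lemma mul_sq_add_two_mul_eq_of_eq_sqrt_sub_div {t : ℝ} (ha : a ≠ 0)
    (hdisc : 0 ≤ b ^ 2 + a * c) (ht : t = (√(b ^ 2 + a * c) - b) / a) :
    a * t ^ 2 + 2 * b * t = c := by
  have hroot : a * t + b = √(b ^ 2 + a * c) := by
    rw [ht, mul_div_cancel₀ _ ha, sub_add_cancel]
  have hsq : (a * t + b) ^ 2 = b ^ 2 + a * c := by rw [hroot, Real.sq_sqrt hdisc]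
  apply mul_left_cancel₀ ha
  linear_combination hsq

end QuadraticRoot

lemma probSimplex_eq_stdSimplex (k : ℕ) : probSimplex k = stdSimplex ℝ (Fin k) :=
  Subset.antisymm (fun _ hq => ⟨fun i => (hq.1 i).1, hq.2⟩)
    fun _ hq => ⟨mem_Icc_of_mem_stdSimplex hq, hq.2⟩

/-- Closed form for primal Bregman 1.5-renormalization. For `x ∈ [0,1]^k`
with `s = Σ xⱼ ≤ 1`, setting `r = Σⱼ √(xⱼ)` and `ν = (√(r² + k(1−s)) − r)/k`, one has
`ν ≥ 0`, and the vector `qᵢ = (√(xᵢ) + ν)²` lies in `Δ_k` and minimizes over `Δ_k` the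
separable Bregman divergence generated by `φ_{3/2}`. -/
theorem primal_three_halves_renormalization_closed_form
    (k : ℕ) (hk : 1 ≤ k) (x : Fin k → ℝ)
    (hx : ∀ i, x i ∈ Set.Icc (0:ℝ) 1) (hs : (∑ j, x j) ≤ 1)
    (s r ν : ℝ)
    (hsdef : s = ∑ j, x j)
    (hrdef : r = ∑ j, Real.sqrt (x j))
    (hνdef : ν = (Real.sqrt (r ^ 2 + (k : ℝ) * (1 - s)) - r) / (k : ℝ)) :
    0 ≤ ν ∧
    (fun i => (Real.sqrt (x i) + ν) ^ 2) ∈ probSimplex k ∧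
    ∀ w ∈ probSimplex k,
      (∑ i, breg phi32 phi32' ((Real.sqrt (x i) + ν) ^ 2) (x i)) ≤
        ∑ i, breg phi32 phi32' (w i) (x i) := by
  have hk0 : (0 : ℝ) < k := by exact_mod_cast hk
  have hs1 : 0 ≤ 1 - s := by rw [hsdef]; exact sub_nonneg.2 hs
  have hν : 0 ≤ ν := hνdef ▸ sqrt_sq_add_mul_sub_div_nonneg hk0.le hs1
  have hquad : k * ν ^ 2 + 2 * r * ν = 1 - s :=
    mul_sq_add_two_mul_eq_of_eq_sqrt_sub_div hk0.ne' (by positivity) hνdef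
  have hsum : ∑ i, (√(x i) + ν) ^ 2 = 1 := by
    rw [sum_sqrt_add_sq (fun i _ => (hx i).1), card_fin, ← hrdef, ← hsdef, hquad,
      add_sub_cancel]
  rw [probSimplex_eq_stdSimplex]
  refine ⟨hν, ⟨fun i => sq_nonneg _, hsum⟩, fun w hw => ?_⟩
  exact sum_breg_le_of_deriv_sub_eq_const convexOn_phi32 (fun i _ => hw.1 i)
    (fun i _ => mem_Ici.2 (sq_nonneg _)) (fun i _ => (hasDerivAt_phi32 _).hasDerivWithinAt)
    (fun i _ => phi32'_sqrt_add_sq_sub (by positivity)) (hw.2.trans hsum.symm)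
end

section
/- Let k ≥ 1 and let p ∈ [0,1]^k with Σᵢ pᵢ < 1. For each β > 0, the map ν ↦ Σᵢ (pᵢ^β + ν)^{1/β} is continuous and strictly increasing on [0,∞), so there is a unique ν_β > 0 with Σᵢ (pᵢ^β + ν_β)^{1/β} = 1; also there is a unique water level c ∈ (0,1] with Σᵢ max{pᵢ, c} = 1. Then for every index i, lim_{β→∞} (pᵢ^β + ν_β)^{1/β} = max{pᵢ, c}. That is, the primal Bregman α-renormalization maps converge pointwise, as α = β + 1 → ∞, to the water-filling renormalization [T_∞(p)]ᵢ = max{pᵢ, c}. -/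
/-!
For large `β` the number `(pᵢ^β + ν)^{1/β}` is close to `max{pᵢ, m}`, where `m = ν^{1/β}`: the two
differ at most by the factor `2^{1/β}`. So if the numbers `(pᵢ^β + ν_β)^{1/β}` have sums tending to
`Σᵢ max{pᵢ, c}`, then `Σᵢ max{pᵢ, m_β}` has the same limit. Since all the functions `max{pᵢ, ·}` are
monotone, increments of the sum do not cancel, and each coordinate `max{pᵢ, m_β}` must converge to
`max{pᵢ, c}` on its own; no convergence of `m_β` is needed.
-/

open Finset Set Filter

section IncrementsOfMonotoneSums

variable {ι α G : Type*} [Fintype ι] [LinearOrder α] [AddCommGroup G] [LinearOrder G]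
  [IsOrderedAddMonoid G] {f : ι → α → G}

lemma abs_sub_le_abs_sum_sub_sum_of_monotone (hf : ∀ i, Monotone (f i)) (i : ι) (x y : α) :
    |f i x - f i y| ≤ |∑ j, f j x - ∑ j, f j y| := by
  wlog hyx : y ≤ x generalizing x y
  · rw [abs_sub_comm, abs_sub_comm (∑ j, f j x)]
    exact this y x (le_of_not_ge hyx)
  have hnonneg (j : ι) : 0 ≤ f j x - f j y := sub_nonneg.mpr (hf j hyx)
  rw [← Finset.sum_sub_distrib, abs_of_nonneg (hnonneg i),
    abs_of_nonneg (Finset.sum_nonneg fun j _ => hnonneg j)]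
  exact Finset.single_le_sum (fun j _ => hnonneg j) (Finset.mem_univ i)

lemma tendsto_of_tendsto_sum_of_monotone [TopologicalSpace G] [OrderTopology G] {γ : Type*}
    {l : Filter γ} (hf : ∀ i, Monotone (f i)) {x : γ → α} {y : α}
    (h : Tendsto (fun t => ∑ j, f j (x t)) l (nhds (∑ j, f j y))) (i : ι) :
    Tendsto (fun t => f i (x t)) l (nhds (f i y)) := by
  rw [LinearOrderedAddCommGroup.tendsto_nhds] at h ⊢
  exact fun ε hε => (h ε hε).mono fun t ht =>
    (abs_sub_le_abs_sum_sub_sum_of_monotone hf i (x t) y).trans_lt ht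

end IncrementsOfMonotoneSums

section WaterLevel

variable {ι : Type*} [Fintype ι]

lemma eq_of_sum_max_eq_sum_max {G : Type*} [AddCommGroup G] [LinearOrder G]
    [IsOrderedAddMonoid G] {p : ι → G} {c d : G} (hc : ∑ i, p i < ∑ i, max (p i) c)
    (hcd : ∑ i, max (p i) d = ∑ i, max (p i) c) : d = c := by
  obtain ⟨j, -, hj⟩ : ∃ j ∈ Finset.univ, p j < max (p j) c := Finset.exists_lt_of_sum_lt hc
  have hmono (i : ι) : Monotone (max (p i)) := monotone_const.max monotone_id
  have hmax : max (p j) d = max (p j) c := by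
    simpa only [hcd, sub_self, abs_zero, abs_nonpos_iff, sub_eq_zero] using
      abs_sub_le_abs_sum_sub_sum_of_monotone hmono j d c
  have hjc : p j < c := by simpa only [lt_max_iff, lt_irrefl, false_or] using hj
  have hjd : p j < d := by simpa only [← hmax, lt_max_iff, lt_irrefl, false_or] using hj
  rwa [max_eq_right hjd.le, max_eq_right hjc.le] at hmax

lemma existsUnique_sum_max_eq [Nonempty ι] {p : ι → ℝ} {s : ℝ} (hp : ∀ i, 0 ≤ p i)
    (hs : ∑ i, p i < s) : ∃! c : ℝ, c ∈ Set.Ioc 0 s ∧ ∑ i, max (p i) c = s := by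
  have hs0 : 0 ≤ s := (Finset.sum_nonneg fun i _ => hp i).trans hs.le
  have hcont : Continuous fun c : ℝ => ∑ i, max (p i) c := by fun_prop
  have hlow : ∑ i, max (p i) 0 < s := by simpa only [max_eq_left (hp _)] using hs
  have hhigh : s ≤ ∑ i, max (p i) s := by
    obtain ⟨i⟩ := ‹Nonempty ι›
    exact (le_max_right _ _).trans
      (Finset.single_le_sum (fun j _ => le_max_of_le_right hs0) (Finset.mem_univ i))
  obtain ⟨c, hc, hcs⟩ := intermediate_value_Ioc hs0 hcont.continuousOn ⟨hlow, hhigh⟩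
  exact ⟨c, ⟨hc, hcs⟩, fun d hd =>
    eq_of_sum_max_eq_sum_max (hs.trans_eq hcs.symm) (hd.2.trans hcs.symm)⟩

end WaterLevel

section ShiftedPowerSum

variable {ι : Type*} [Fintype ι] {a : ι → ℝ} {r : ℝ}

lemma continuous_sum_add_rpow (hr : 0 ≤ r) : Continuous fun ν : ℝ => ∑ i, (a i + ν) ^ r :=
  continuous_finsetSum _ fun _ _ => (continuous_const.add continuous_id).rpow_const fun _ => .inr hr

lemma strictMonoOn_sum_add_rpow [Nonempty ι] (ha : ∀ i, 0 ≤ a i) (hr : 0 < r) :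
    StrictMonoOn (fun ν : ℝ => ∑ i, (a i + ν) ^ r) (Set.Ici 0) := fun _ hν _ _ hlt =>
  Finset.sum_lt_sum_of_nonempty Finset.univ_nonempty fun i _ =>
    Real.rpow_lt_rpow (add_nonneg (ha i) hν) (by gcongr) hr

lemma existsUnique_sum_add_rpow_eq [Nonempty ι] {s : ℝ} (ha : ∀ i, 0 ≤ a i) (hr : 0 < r)
    (hs : ∑ i, a i ^ r < s) : ∃! ν : ℝ, 0 < ν ∧ ∑ i, (a i + ν) ^ r = s := by
  have hs0 : 0 ≤ s := (Finset.sum_nonneg fun i _ => Real.rpow_nonneg (ha i) r).trans hs.le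
  have hb : 0 ≤ s ^ r⁻¹ := Real.rpow_nonneg hs0 _
  have hlow : ∑ i, (a i + 0) ^ r < s := by simpa only [add_zero] using hs
  have hhigh : s ≤ ∑ i, (a i + s ^ r⁻¹) ^ r := by
    obtain ⟨i⟩ := ‹Nonempty ι›
    calc s = (s ^ r⁻¹) ^ r := (Real.rpow_inv_rpow hs0 hr.ne').symm
      _ ≤ (a i + s ^ r⁻¹) ^ r := Real.rpow_le_rpow hb (le_add_of_nonneg_left (ha i)) hr.le
      _ ≤ ∑ j, (a j + s ^ r⁻¹) ^ r :=
        Finset.single_le_sum (f := fun j => (a j + s ^ r⁻¹) ^ r)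
          (fun j _ => Real.rpow_nonneg (add_nonneg (ha j) hb) r) (Finset.mem_univ i)
  obtain ⟨ν, hν, hνs⟩ := intermediate_value_Ioc hb
    (continuous_sum_add_rpow hr.le).continuousOn ⟨hlow, hhigh⟩
  exact ⟨ν, ⟨hν.1, hνs⟩, fun μ hμ =>
    (strictMonoOn_sum_add_rpow ha hr).injOn hμ.1.le hν.1.le (hμ.2.trans hνs.symm)⟩

end ShiftedPowerSum

section ComparisonWithMax

variable {x ν β : ℝ}

lemma max_rpow_one_div (hx : 0 ≤ x) (hν : 0 ≤ ν) (hβ : 0 < β) :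
    max x (ν ^ (1 / β)) = max (x ^ β) ν ^ (1 / β) := by
  rw [Real.rpow_max (Real.rpow_nonneg hx β) hν (one_div_pos.mpr hβ).le, one_div,
    Real.rpow_rpow_inv hx hβ.ne']

lemma max_le_rpow_add_rpow_one_div (hx : 0 ≤ x) (hν : 0 ≤ ν) (hβ : 0 < β) :
    max x (ν ^ (1 / β)) ≤ (x ^ β + ν) ^ (1 / β) := by
  rw [max_rpow_one_div hx hν hβ]
  have hxβ : 0 ≤ x ^ β := Real.rpow_nonneg hx β
  gcongr
  exact max_le_add_of_nonneg hxβ hν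

lemma rpow_add_rpow_one_div_le (hx : 0 ≤ x) (hν : 0 ≤ ν) (hβ : 0 < β) :
    (x ^ β + ν) ^ (1 / β) ≤ 2 ^ (1 / β) * max x (ν ^ (1 / β)) := by
  have : 0 ≤ x ^ β := Real.rpow_nonneg hx β
  rw [max_rpow_one_div hx hν hβ, ← Real.mul_rpow zero_le_two (le_max_of_le_right hν), two_mul]
  gcongr
  exacts [le_max_left _ _, le_max_right _ _]

end ComparisonWithMax

section Limit

lemma tendsto_rpow_one_div_atTop {a : ℝ} (ha : a ≠ 0) :
    Tendsto (fun β : ℝ => a ^ (1 / β)) atTop (nhds 1) := by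
  have hinv : Tendsto (fun β : ℝ => 1 / β) atTop (nhds 0) := by
    simpa only [one_div] using tendsto_inv_atTop_zero (𝕜 := ℝ)
  simpa only [Real.rpow_zero] using tendsto_const_nhds.rpow hinv (.inl ha)

variable {ι : Type*} [Fintype ι] {p : ι → ℝ} {ν : ℝ → ℝ} {s : ℝ}

lemma tendsto_sum_max_of_tendsto_sum_rpow_add (hp : ∀ i, 0 ≤ p i) (hν : ∀ᶠ β in atTop, 0 ≤ ν β)
    (hs : Tendsto (fun β => ∑ i, (p i ^ β + ν β) ^ (1 / β)) atTop (nhds s)) :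
    Tendsto (fun β => ∑ i, max (p i) (ν β ^ (1 / β))) atTop (nhds s) := by
  have hlow : Tendsto (fun β => (∑ i, (p i ^ β + ν β) ^ (1 / β)) / 2 ^ (1 / β)) atTop (nhds s) := by
    simpa only [div_one, Pi.div_def] using
      hs.div (tendsto_rpow_one_div_atTop two_ne_zero) one_ne_zero
  refine tendsto_of_tendsto_of_tendsto_of_le_of_le' hlow hs ?_ ?_
  · filter_upwards [hν, eventually_gt_atTop 0] with β hνβ hβ
    rw [div_le_iff₀' (by positivity), Finset.mul_sum]
    exact Finset.sum_le_sum fun i _ => rpow_add_rpow_one_div_le (hp i) hνβ hβ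
  · filter_upwards [hν, eventually_gt_atTop 0] with β hνβ hβ
    exact Finset.sum_le_sum fun i _ => max_le_rpow_add_rpow_one_div (hp i) hνβ hβ

lemma tendsto_rpow_add_rpow_one_div_of_tendsto_max {x y : ℝ} (hx : 0 ≤ x)
    (hν : ∀ᶠ β in atTop, 0 ≤ ν β)
    (hy : Tendsto (fun β => max x (ν β ^ (1 / β))) atTop (nhds y)) :
    Tendsto (fun β => (x ^ β + ν β) ^ (1 / β)) atTop (nhds y) := by
  have hhigh : Tendsto (fun β => 2 ^ (1 / β) * max x (ν β ^ (1 / β))) atTop (nhds y) := by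
    simpa only [one_mul] using (tendsto_rpow_one_div_atTop two_ne_zero).mul hy
  refine tendsto_of_tendsto_of_tendsto_of_le_of_le' hy hhigh ?_ ?_
  · filter_upwards [hν, eventually_gt_atTop 0] with β hνβ hβ
    exact max_le_rpow_add_rpow_one_div hx hνβ hβ
  · filter_upwards [hν, eventually_gt_atTop 0] with β hνβ hβ
    exact rpow_add_rpow_one_div_le hx hνβ hβ

lemma tendsto_rpow_add_rpow_one_div_of_tendsto_sum {c : ℝ} (hp : ∀ i, 0 ≤ p i)
    (hν : ∀ᶠ β in atTop, 0 ≤ ν β)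
    (hs : Tendsto (fun β => ∑ i, (p i ^ β + ν β) ^ (1 / β)) atTop (nhds (∑ i, max (p i) c)))
    (i : ι) : Tendsto (fun β => (p i ^ β + ν β) ^ (1 / β)) atTop (nhds (max (p i) c)) := by
  have hmono (j : ι) : Monotone (max (p j)) := monotone_const.max monotone_id
  exact tendsto_rpow_add_rpow_one_div_of_tendsto_max (hp i) hν
    (tendsto_of_tendsto_sum_of_monotone hmono
      (tendsto_sum_max_of_tendsto_sum_rpow_add hp hν hs) i)

end Limit

theorem waterfilling_limit_general {ι : Type*} [Fintype ι] [Nonempty ι] {p : ι → ℝ} {s : ℝ}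
    (hp : ∀ i, 0 ≤ p i) (hsum : ∑ i, p i < s) :
    (∀ β : ℝ, 0 < β →
      ContinuousOn (fun ν : ℝ => ∑ i, (p i ^ β + ν) ^ (1 / β)) (Set.Ici 0) ∧
      StrictMonoOn (fun ν : ℝ => ∑ i, (p i ^ β + ν) ^ (1 / β)) (Set.Ici 0) ∧
      ∃! ν : ℝ, 0 < ν ∧ ∑ i, (p i ^ β + ν) ^ (1 / β) = s) ∧
    (∃! c : ℝ, c ∈ Set.Ioc 0 s ∧ ∑ i, max (p i) c = s) ∧
    ∀ (ν : ℝ → ℝ) (c : ℝ), (∀ᶠ β in atTop, 0 ≤ ν β) →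
      Tendsto (fun β => ∑ i, (p i ^ β + ν β) ^ (1 / β)) atTop (nhds s) →
      ∑ i, max (p i) c = s →
      ∀ i, Tendsto (fun β => (p i ^ β + ν β) ^ (1 / β)) atTop (nhds (max (p i) c)) := by
  refine ⟨fun β hβ => ?_, existsUnique_sum_max_eq hp hsum, ?_⟩
  · have hpβ (i : ι) : 0 ≤ p i ^ β := Real.rpow_nonneg (hp i) β
    have hβ' : 0 < 1 / β := one_div_pos.mpr hβ
    have hroot : ∑ i, (p i ^ β) ^ (1 / β) < s := by
      simpa only [one_div, Real.rpow_rpow_inv (hp _) hβ.ne'] using hsum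
    exact ⟨(continuous_sum_add_rpow hβ'.le).continuousOn, strictMonoOn_sum_add_rpow hpβ hβ',
      existsUnique_sum_add_rpow_eq hpβ hβ' hroot⟩
  · rintro ν c hν hs rfl
    exact tendsto_rpow_add_rpow_one_div_of_tendsto_sum hp hν hs

/-- Water-filling limit of primal Bregman α-renormalization. Let
`p ∈ [0,1]^k` with `Σ pᵢ < 1`. For each `β > 0` the map
`ν ↦ Σᵢ (pᵢ^β + ν)^{1/β}` is continuous and strictly increasing on `[0,∞)` and there
is a unique `ν_β > 0` making the sum equal to `1`; there is a unique water level
`c ∈ (0,1]` with `Σᵢ max{pᵢ, c} = 1`; and for every `i`,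
`(pᵢ^β + ν_β)^{1/β} → max{pᵢ, c}` as `β → ∞`. -/
theorem waterfilling_limit
    (k : ℕ) (hk : 1 ≤ k) (p : Fin k → ℝ)
    (hp : ∀ i, p i ∈ Set.Icc (0:ℝ) 1) (hsum : (∑ i, p i) < 1) :
    (∀ β : ℝ, 0 < β →
      ContinuousOn (fun ν : ℝ => ∑ i, (p i ^ β + ν) ^ (1/β)) (Set.Ici 0) ∧
      StrictMonoOn (fun ν : ℝ => ∑ i, (p i ^ β + ν) ^ (1/β)) (Set.Ici 0) ∧
      ∃! ν : ℝ, 0 < ν ∧ (∑ i, (p i ^ β + ν) ^ (1/β)) = 1) ∧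
    (∃! c : ℝ, c ∈ Set.Ioc (0:ℝ) 1 ∧ (∑ i, max (p i) c) = 1) ∧
    ∀ (ν : ℝ → ℝ) (c : ℝ),
      (∀ β : ℝ, 0 < β → 0 < ν β ∧ (∑ i, (p i ^ β + ν β) ^ (1/β)) = 1) →
      c ∈ Set.Ioc (0:ℝ) 1 → (∑ i, max (p i) c) = 1 →
      ∀ i, Filter.Tendsto (fun β : ℝ => (p i ^ β + ν β) ^ (1/β))
        Filter.atTop (nhds (max (p i) c)) := by
  have : Nonempty (Fin k) := Fin.pos_iff_nonempty.mp hk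
  obtain ⟨hnormalizer, hlevel, hlimit⟩ := waterfilling_limit_general (fun i => (hp i).1) hsum
  exact ⟨hnormalizer, hlevel, fun ν c hν _ hc => hlimit ν c
    ((eventually_gt_atTop 0).mono fun β hβ => (hν β hβ).1.le)
    (tendsto_const_nhds.congr' ((eventually_gt_atTop 0).mono fun β hβ => (hν β hβ).2.symm)) hc⟩
end

section
/- Let k ≥ 1 and let p ∈ (0,1]^k with Σ_{j=1}^k p_j ≤ 1, and suppose the maximal entry is attained at a unique index i*, i.e. p_{i*} > pᵢ for all i ≠ i*. Set δ = 1 − Σ_{j=1}^k p_j. For each β < 0, let ν_β be the unique real number with ν_β > −minᵢ pᵢ^β such that Σᵢ (pᵢ^β + ν_β)^{1/β} = 1. Then as β → −∞: (pᵢ^β + ν_β)^{1/β} → pᵢ for every i ≠ i*, and (p_{i*}^β + ν_β)^{1/β} → p_{i*} + δ. That is, the primal Bregman α-renormalization converges, as α → −∞, to the map that assigns all leftover mass 1 − Σ_j p_j to the unique largest coordinate and leaves the others unchanged. -/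
open Finset Set Filter

/-!
Since `x ↦ x ^ β⁻¹` is decreasing for `β < 0`, a positive shift would lower every coordinate and
with it the total mass; hence `-(p m ^ β) < ν β ≤ 0`, where `p m` is the largest entry. So for
`p i < p m` the shift is negligible against `p i ^ β`, and the factor `(1 + ν β / p i ^ β) ^ β⁻¹`
by which coordinate `i` changes tends to `1 ^ 0 = 1`. The maximal coordinates all stay equal, so
they share the leftover mass evenly.
-/

open Asymptotics Bornology
open scoped Topology

theorem tendsto_rpow_add_rpow_inv_nhds_of_isLittleO {l : Filter ℝ} (hl : l ≤ cobounded ℝ) {a : ℝ}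
    (ha : 0 < a) {ν : ℝ → ℝ} (hν : ν =o[l] fun β ↦ a ^ β) :
    Tendsto (fun β ↦ (a ^ β + ν β) ^ β⁻¹) l (𝓝 a) := by
  have hratio : Tendsto (fun β ↦ 1 + ν β / a ^ β) l (𝓝 1) := by
    simpa using hν.tendsto_div_nhds_zero.const_add 1
  have hinv : Tendsto (fun β : ℝ ↦ β⁻¹) l (𝓝 0) := tendsto_inv₀_cobounded.mono_left hl
  have hlim : Tendsto (fun β ↦ a * (1 + ν β / a ^ β) ^ β⁻¹) l (𝓝 a) := by
    simpa using (hratio.rpow hinv (Or.inl one_ne_zero)).const_mul a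
  refine hlim.congr' ?_
  filter_upwards [hratio.eventually_const_lt zero_lt_one, hl (eventually_ne_cobounded 0)]
    with β hβ hβ0
  have hpow : 0 < a ^ β := Real.rpow_pos_of_pos ha β
  calc a * (1 + ν β / a ^ β) ^ β⁻¹
      = (a ^ β) ^ β⁻¹ * (1 + ν β / a ^ β) ^ β⁻¹ := by rw [Real.rpow_rpow_inv ha.le hβ0]
    _ = (a ^ β * (1 + ν β / a ^ β)) ^ β⁻¹ := (Real.mul_rpow hpow.le hβ.le).symm
    _ = (a ^ β + ν β) ^ β⁻¹ := by rw [mul_one_add, mul_div_cancel₀ _ hpow.ne']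

theorem isLittleO_rpow_atBot_of_base_lt {a b : ℝ} (ha : 0 < a) (hab : a < b) :
    (fun β : ℝ ↦ b ^ β) =o[atBot] fun β ↦ a ^ β := by
  refine isLittleO_of_tendsto (fun β h ↦ absurd h (Real.rpow_pos_of_pos ha β).ne') ?_
  simpa only [Real.div_rpow (ha.trans hab).le ha.le] using
    tendsto_rpow_atBot_of_base_gt_one (b / a) ((one_lt_div ha).2 hab)

theorem nonpos_of_sum_le_sum_rpow_add_rpow_inv {ι : Type*} {s : Finset ι} (hs : s.Nonempty)
    {p : ι → ℝ} (hp : ∀ i ∈ s, 0 < p i) {β c : ℝ} (hβ : β < 0)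
    (hsum : ∑ i ∈ s, p i ≤ ∑ i ∈ s, (p i ^ β + c) ^ β⁻¹) : c ≤ 0 := by
  contrapose! hsum with hc
  refine Finset.sum_lt_sum_of_nonempty hs fun i hi ↦ ?_
  calc (p i ^ β + c) ^ β⁻¹ < (p i ^ β) ^ β⁻¹ :=
        Real.rpow_lt_rpow_of_neg (Real.rpow_pos_of_pos (hp i hi) β) (lt_add_of_pos_right _ hc)
          (inv_lt_zero.2 hβ)
    _ = p i := Real.rpow_rpow_inv (hp i hi).le hβ.ne

theorem tendsto_add_sub_sum_div_card {α ι : Type*} [Fintype ι] {l : Filter α}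
    {x : ι → α → ℝ} {y : ι → ℝ} {s : ℝ} {M : Finset ι} {m : ι} (hm : m ∈ M)
    (hsum : ∀ᶠ t in l, ∑ i, x i t = s) (hx : ∀ i ∈ M, x i = x m) (hy : ∀ i ∈ M, y i = y m)
    (hlim : ∀ i ∉ M, Tendsto (x i) l (𝓝 (y i))) :
    Tendsto (x m) l (𝓝 (y m + (s - ∑ i, y i) / #M)) := by
  classical
  have hcard : (#M : ℝ) ≠ 0 := Nat.cast_ne_zero.2 (card_ne_zero_of_mem hm)
  have hsplit (z : ι → ℝ) (hz : ∀ i ∈ M, z i = z m) :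
      ∑ i, z i = #M * z m + ∑ i ∈ Mᶜ, z i := by
    rw [← sum_add_sum_compl M, sum_congr rfl hz, sum_const, nsmul_eq_mul]
  have hrest : Tendsto (fun t ↦ (s - ∑ i ∈ Mᶜ, x i t) / #M) l
      (𝓝 ((s - ∑ i ∈ Mᶜ, y i) / #M)) :=
    ((tendsto_finsetSum _ fun i hi ↦ hlim i (mem_compl.1 hi)).const_sub s).div_const _
  have hvalue : y m + (s - ∑ i, y i) / #M = (s - ∑ i ∈ Mᶜ, y i) / #M := by
    rw [hsplit y hy]
    field_simp
    ring
  rw [hvalue]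
  refine hrest.congr' ?_
  filter_upwards [hsum] with t ht
  rw [hsplit (x · t) fun i hi ↦ congrFun (hx i hi) t] at ht
  rw [div_eq_iff hcard]
  linarith

theorem alpha_neg_infinity_limit_general {ι : Type*} [Fintype ι] {p : ι → ℝ} (hp : ∀ i, 0 < p i)
    {s : ℝ} (hsum : ∑ j, p j ≤ s) {M : Finset ι} {m : ι} (hm : m ∈ M)
    (hmax : ∀ i ∈ M, p i = p m) (hlt : ∀ i ∉ M, p i < p m) {ν : ℝ → ℝ}
    (hν : ∀ᶠ β in atBot, -(p m ^ β) < ν β ∧ ∑ i, (p i ^ β + ν β) ^ β⁻¹ = s) :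
    (∀ i ∉ M, Tendsto (fun β ↦ (p i ^ β + ν β) ^ β⁻¹) atBot (𝓝 (p i))) ∧
    Tendsto (fun β ↦ (p m ^ β + ν β) ^ β⁻¹) atBot (𝓝 (p m + (s - ∑ j, p j) / #M)) := by
  have hbound : ν =O[atBot] fun β ↦ p m ^ β := by
    refine IsBigO.of_norm_eventuallyLE ?_
    filter_upwards [hν, eventually_lt_atBot 0] with β ⟨hlower, hmass⟩ hβ
    have hnonpos : ν β ≤ 0 := nonpos_of_sum_le_sum_rpow_add_rpow_inv ⟨m, mem_univ m⟩
      (fun i _ ↦ hp i) hβ (hsum.trans_eq hmass.symm)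
    rw [Real.norm_of_nonpos hnonpos]
    linarith
  have hlim (i : ι) (hi : i ∉ M) :
      Tendsto (fun β ↦ (p i ^ β + ν β) ^ β⁻¹) atBot (𝓝 (p i)) :=
    tendsto_rpow_add_rpow_inv_nhds_of_isLittleO IsOrderBornology.atBot_le_cobounded (hp i)
      (hbound.trans_isLittleO (isLittleO_rpow_atBot_of_base_lt (hp i) (hlt i hi)))
  exact ⟨hlim, tendsto_add_sub_sum_div_card (x := fun i β ↦ (p i ^ β + ν β) ^ β⁻¹) hm
    (hν.mono fun _ h ↦ h.2) (fun i hi ↦ by simp only [hmax i hi]) hmax hlim⟩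

/-- The `α → −∞` limit of primal Bregman α-renormalization. Let
`p ∈ (0,1]^k` with `Σ pⱼ ≤ 1` and a unique largest entry at `i*`. For each `β < 0`,
let `ν_β` satisfy `ν_β > −minᵢ pᵢ^β` (equivalently `−pᵢ^β < ν_β` for all `i`) and
`Σᵢ (pᵢ^β + ν_β)^{1/β} = 1`. Then as `β → −∞`, `(pᵢ^β + ν_β)^{1/β} → pᵢ` for `i ≠ i*`,
while `(p_{i*}^β + ν_β)^{1/β} → p_{i*} + (1 − Σⱼ pⱼ)`. -/
theorem alpha_neg_infinity_limit
    (k : ℕ) (hk : 1 ≤ k) (p : Fin k → ℝ)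
    (hp : ∀ i, p i ∈ Set.Ioc (0:ℝ) 1) (hsum : (∑ j, p j) ≤ 1)
    (istar : Fin k) (hmax : ∀ i, i ≠ istar → p i < p istar)
    (ν : ℝ → ℝ)
    (hν : ∀ β : ℝ, β < 0 →
      (∀ i, -(p i ^ β) < ν β) ∧ (∑ i, (p i ^ β + ν β) ^ (1/β)) = 1) :
    (∀ i, i ≠ istar →
      Filter.Tendsto (fun β : ℝ => (p i ^ β + ν β) ^ (1/β))
        Filter.atBot (nhds (p i))) ∧
    Filter.Tendsto (fun β : ℝ => (p istar ^ β + ν β) ^ (1/β))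
      Filter.atBot (nhds (p istar + (1 - ∑ j, p j))) := by
  simpa using alpha_neg_infinity_limit_general (M := {istar}) (fun i ↦ (hp i).1) hsum (by simp)
    (by simp) (by simpa using hmax)
    ((eventually_lt_atBot 0).mono fun β hβ ↦ by simpa using (hν β hβ).imp_left (· istar))
end

section
/- Let φ : [0,1] → ℝ be three times differentiable on (0,1], define v(x,y) = φ''(y) + φ'''(y)·(y − x), and define ψ(x,y) = φ(y) − φ'(y)·(y − x). Fix x ∈ [0,1] and ν₀ > 0, and suppose ξ : U → (0,1] is differentiable on an open neighborhood U of ν₀ with ξ(ν) ≥ x, φ''(ξ(ν))·(ξ(ν) − x) = ν for all ν ∈ U, and v(x, ξ(ν₀)) > 0. Then the map ν ↦ ψ(x, ξ(ν)) is differentiable at ν₀ with derivative −ν₀ / v(x, ξ(ν₀)), which is ≤ 0; in particular the per-coordinate dual loss contribution h(x,ν) = ψ(x, ξ(x,ν)) is nonincreasing in the Lagrange multiplier ν. -/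
open Set Filter

/-!
The map `y ↦ φ''(y) (y - x)` has derivative `v(x, y)`, and the stationarity equation makes `ξ` a
local right inverse of it, so `ξ'(ν₀) = 1 / v(x, ξ(ν₀))`. In `∂ψ/∂y` the first-order terms cancel
and `-φ''(y) (y - x)` remains, which the stationarity equation evaluates to `-ν₀` at `y = ξ(ν₀)`.
The chain rule multiplies the two. Since `ξ` stays in `(0, 1]`, derivatives within `(0, 1]` suffice,
even if `ξ(ν₀) = 1`.
-/

open scoped Topology

section DualLoss

variable {𝕜 : Type*} [NontriviallyNormedField 𝕜]

/-- The value `ψ(x, y)` at `x` of the tangent line to `φ` at `y`; the dual Bregman loss of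
projecting `x` to `y` is `φ(x) - ψ(x, y)`. The derivative is passed as a separate function `φ'`, so
that it can be a derivative within a set. -/
def tangentValue (φ φ' : 𝕜 → 𝕜) (x y : 𝕜) : 𝕜 :=
  φ y - φ' y * (y - x)

/-- The left-hand side `φ''(y) (y - x)` of the dual projection stationarity equation, whose value at
the projected point `y` is the Lagrange multiplier. -/
def dualStationarity (φ'' : 𝕜 → 𝕜) (x y : 𝕜) : 𝕜 :=
  φ'' y * (y - x)

/-- The derivative `v(x, y) = φ''(y) + φ'''(y) (y - x)` of `dualStationarity φ'' x` at `y`, with the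
derivative of `φ''` passed as a separate function `φ'''`. -/
def dualStationarityDeriv (φ'' φ''' : 𝕜 → 𝕜) (x y : 𝕜) : 𝕜 :=
  φ'' y + φ''' y * (y - x)

theorem hasDerivWithinAt_tangentValue {φ φ' φ'' : 𝕜 → 𝕜} {s : Set 𝕜} {y : 𝕜}
    (hφ : HasDerivWithinAt φ (φ' y) s y) (hφ' : HasDerivWithinAt φ' (φ'' y) s y) (x : 𝕜) :
    HasDerivWithinAt (tangentValue φ φ' x) (-dualStationarity φ'' x y) s y := by
  refine (hφ.sub (hφ'.mul ((hasDerivWithinAt_id y s).sub_const x))).congr_deriv ?_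
  simp only [dualStationarity, id]
  ring

theorem hasDerivWithinAt_dualStationarity {φ'' φ''' : 𝕜 → 𝕜} {s : Set 𝕜} {y : 𝕜}
    (hφ'' : HasDerivWithinAt φ'' (φ''' y) s y) (x : 𝕜) :
    HasDerivWithinAt (dualStationarity φ'' x) (dualStationarityDeriv φ'' φ''' x y) s y := by
  refine (hφ''.mul ((hasDerivWithinAt_id y s).sub_const x)).congr_deriv ?_
  simp only [dualStationarityDeriv, id]
  ring

theorem hasDerivAt_of_local_left_inverse_within {f g : 𝕜 → 𝕜} {f' a : 𝕜} {s : Set 𝕜}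
    (hg : ContinuousAt g a) (hgs : ∀ᶠ b in 𝓝 a, g b ∈ s) (hf : HasDerivWithinAt f f' s (g a))
    (hf' : f' ≠ 0) (hfg : ∀ᶠ b in 𝓝 a, f (g b) = b) : HasDerivAt g f'⁻¹ a := by
  have hequiv : HasFDerivWithinAt f
      (ContinuousLinearEquiv.unitsEquivAut 𝕜 (Units.mk0 f' hf') : 𝕜 →L[𝕜] 𝕜) s (g a) :=
    hf
  have htendsto : Tendsto g (𝓝[univ] a) (𝓝[s] g a) := by
    rw [nhdsWithin_univ]
    exact tendsto_nhdsWithin_iff.2 ⟨hg, hgs⟩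
  rw [← nhdsWithin_univ] at hfg
  exact hasDerivWithinAt_univ.1 (hequiv.of_local_left_inverse htendsto (mem_univ a) hfg)

theorem dual_loss_decreasing_in_multiplier_general
    {φ φ' φ'' φ''' ξ : 𝕜 → 𝕜} {s : Set 𝕜} {x ν₀ : 𝕜}
    (hφ : HasDerivWithinAt φ (φ' (ξ ν₀)) s (ξ ν₀))
    (hφ' : HasDerivWithinAt φ' (φ'' (ξ ν₀)) s (ξ ν₀))
    (hφ'' : HasDerivWithinAt φ'' (φ''' (ξ ν₀)) s (ξ ν₀))
    (hξ : ContinuousAt ξ ν₀) (hξs : ∀ᶠ ν in 𝓝 ν₀, ξ ν ∈ s)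
    (hstat : ∀ᶠ ν in 𝓝 ν₀, dualStationarity φ'' x (ξ ν) = ν)
    (hv : dualStationarityDeriv φ'' φ''' x (ξ ν₀) ≠ 0) :
    HasDerivAt (fun ν ↦ tangentValue φ φ' x (ξ ν))
      (-ν₀ / dualStationarityDeriv φ'' φ''' x (ξ ν₀)) ν₀ := by
  have hξderiv : HasDerivAt ξ (dualStationarityDeriv φ'' φ''' x (ξ ν₀))⁻¹ ν₀ :=
    hasDerivAt_of_local_left_inverse_within hξ hξs (hasDerivWithinAt_dualStationarity hφ'' x) hv
      hstat
  have hψ : HasDerivWithinAt (tangentValue φ φ' x) (-ν₀) s (ξ ν₀) := by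
    simpa only [hstat.self_of_nhds] using hasDerivWithinAt_tangentValue hφ hφ' x
  have hchain := (hψ.comp_hasFDerivAt ν₀ hξderiv.hasFDerivAt hξs).hasDerivAt
  simpa [div_eq_mul_inv, Function.comp_def] using hchain

end DualLoss

/-- The per-coordinate dual loss contribution is nonincreasing in the
Lagrange multiplier. Let `φ` be three times differentiable on `(0,1]`, set
`v(x,y) = φ''(y) + φ'''(y)(y − x)` and `ψ(x,y) = φ(y) − φ'(y)(y − x)`. If `ξ` is
differentiable on an open neighborhood `U` of `ν₀ > 0` with `ξ(ν) ∈ (0,1]`,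
`ξ(ν) ≥ x`, `φ''(ξ(ν))(ξ(ν) − x) = ν` on `U`, and `v(x, ξ(ν₀)) > 0`, then
`ν ↦ ψ(x, ξ(ν))` has derivative `−ν₀/v(x, ξ(ν₀)) ≤ 0` at `ν₀`. -/
theorem dual_loss_decreasing_in_multiplier
    (φ φ' φ'' φ''' : ℝ → ℝ)
    (hd1 : ∀ t ∈ Set.Ioc (0:ℝ) 1, HasDerivWithinAt φ (φ' t) (Set.Ioc 0 1) t)
    (hd2 : ∀ t ∈ Set.Ioc (0:ℝ) 1, HasDerivWithinAt φ' (φ'' t) (Set.Ioc 0 1) t)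
    (hd3 : ∀ t ∈ Set.Ioc (0:ℝ) 1, HasDerivWithinAt φ'' (φ''' t) (Set.Ioc 0 1) t)
    (x : ℝ) (hx : x ∈ Set.Icc (0:ℝ) 1)
    (ν₀ : ℝ) (hν₀ : 0 < ν₀)
    (U : Set ℝ) (hU : IsOpen U) (hν₀U : ν₀ ∈ U)
    (ξ : ℝ → ℝ)
    (hξdiff : ∀ ν ∈ U, DifferentiableAt ℝ ξ ν)
    (hξ : ∀ ν ∈ U, ξ ν ∈ Set.Ioc (0:ℝ) 1 ∧ x ≤ ξ ν ∧ φ'' (ξ ν) * (ξ ν - x) = ν)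
    (hv : 0 < φ'' (ξ ν₀) + φ''' (ξ ν₀) * (ξ ν₀ - x)) :
    HasDerivAt (fun ν => φ (ξ ν) - φ' (ξ ν) * (ξ ν - x))
      (-ν₀ / (φ'' (ξ ν₀) + φ''' (ξ ν₀) * (ξ ν₀ - x))) ν₀ ∧
    -ν₀ / (φ'' (ξ ν₀) + φ''' (ξ ν₀) * (ξ ν₀ - x)) ≤ 0 := by
  have hmem : ξ ν₀ ∈ Ioc 0 1 := (hξ ν₀ hν₀U).1
  have hUξ := eventually_of_mem (hU.mem_nhds hν₀U) hξ
  exact ⟨dual_loss_decreasing_in_multiplier_general (hd1 _ hmem) (hd2 _ hmem) (hd3 _ hmem)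
      (hξdiff ν₀ hν₀U).continuousAt (hUξ.mono fun _ h ↦ h.1) (hUξ.mono fun _ h ↦ h.2.2) hv.ne',
    div_nonpos_of_nonpos_of_nonneg (neg_nonpos.2 hν₀.le) hv.le⟩
end

section
/- Let φ : [0,1] → ℝ be three times differentiable on (0,1] with φ' ≥ 0 on (0,1], suppose the elasticity u(t) = t·φ''(t)/φ'(t) is nondecreasing on (0,1], and define v(x,y) = φ''(y) + φ'''(y)·(y − x) and ψ(x,y) = φ(y) − φ'(y)·(y − x). Fix ν > 0 and x₀ ∈ [0,1), and suppose η is a differentiable function on an open neighborhood of x₀ with η(x) ∈ (0,1], η(x) ≥ x, φ''(η(x))·(η(x) − x) = ν, and v(x, η(x)) > 0. Then the map x ↦ ψ(x, η(x)) is differentiable at x₀ with derivative φ'(η(x₀)) − ν·φ''(η(x₀))/v(x₀, η(x₀)), and this derivative is ≥ 0; in particular the per-coordinate dual loss contribution h(x,ν) = ψ(x, ξ(x,ν)) is nondecreasing in x. -/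
open Set Filter

/-!
Put `y = η x₀`. The constraint `φ''(y) (y - x) = ν` can be solved explicitly for `x`, namely
`x = y - ν / φ''(y)`, so a continuous solution `η` is a local inverse of a differentiable function
and `η'(x₀) = φ''(y) / v(x₀, y)`. As `ψ(x, z)` is the value at `x` of the tangent line of `φ` at
`z`, moving `z` changes it at the rate `-φ''(z) (z - x)`, which on the constraint is `-ν`; hence
the derivative `φ'(y) - ν η'(x₀)`.

For its sign, `φ''(y) > 0` and `φ' ≥ 0` on the left of `y` give `φ'(y) > 0`, so the elasticity is
differentiable at `y` and its monotonicity reads `y φ''(y)² ≤ φ'(y) (φ''(y) + y φ'''(y))`. Rescaling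
by `(y - x₀) / y ∈ (0, 1]` turns this into `(y - x₀) φ''(y)² ≤ φ'(y) v(x₀, y)`, which gives both
`v(x₀, y) > 0` and `ν φ''(y) / v(x₀, y) ≤ φ'(y)`.
-/

open scoped Topology

section ImplicitDerivative

variable {𝕜 : Type*} [NontriviallyNormedField 𝕜] {f g : 𝕜 → 𝕜} {f' a : 𝕜} {s : Set 𝕜}

lemma hasDerivAt_of_leftInverse_hasDerivWithinAt (hf : HasDerivWithinAt f f' s (g a))
    (hf' : f' ≠ 0) (hg : ContinuousAt g a) (hgs : ∀ᶠ x in 𝓝 a, g x ∈ s)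
    (hfg : ∀ᶠ x in 𝓝 a, f (g x) = x) : HasDerivAt g f'⁻¹ a := by
  have hf_equiv : HasFDerivWithinAt f
      (ContinuousLinearEquiv.unitsEquivAut 𝕜 (Units.mk0 f' hf') : 𝕜 →L[𝕜] 𝕜) s (g a) := hf
  rw [← nhdsWithin_univ] at hfg
  rw [← hasDerivWithinAt_univ]
  refine hf_equiv.of_local_left_inverse ?_ (mem_univ a) hfg
  rw [nhdsWithin_univ]
  exact tendsto_nhdsWithin_iff.2 ⟨hg, hgs⟩

lemma hasDerivAt_of_mul_sub_eq {c : 𝕜} (hc : c ≠ 0) (hf : HasDerivWithinAt f f' s (g a))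
    (hv : f (g a) + f' * (g a - a) ≠ 0) (hg : ContinuousAt g a) (hgs : ∀ᶠ x in 𝓝 a, g x ∈ s)
    (hfg : ∀ᶠ x in 𝓝 a, f (g x) * (g x - x) = c) :
    HasDerivAt g (f (g a) / (f (g a) + f' * (g a - a))) a := by
  have hc_eq : f (g a) * (g a - a) = c := hfg.self_of_nhds
  have hfa : f (g a) ≠ 0 := left_ne_zero_of_mul (hc_eq ▸ hc)
  have hsolved : HasDerivWithinAt (fun z => z - c / f z)
      ((f (g a) + f' * (g a - a)) / f (g a)) s (g a) := by
    refine ((hasDerivWithinAt_id _ s).sub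
      ((hasDerivWithinAt_const _ s c).div hf hfa)).congr_deriv ?_
    rw [← hc_eq]
    field_simp
    ring
  rw [← inv_div]
  refine hasDerivAt_of_leftInverse_hasDerivWithinAt hsolved (div_ne_zero hv hfa) hg hgs ?_
  filter_upwards [hfg] with x hx
  have hfx : f (g x) ≠ 0 := left_ne_zero_of_mul (hx ▸ hc)
  rw [← hx, mul_div_cancel_left₀ _ hfx, sub_sub_cancel]

lemma hasDerivAt_tangentLine_comp {f' : 𝕜 → 𝕜} {f'' g' : 𝕜}
    (hf : HasDerivWithinAt f (f' (g a)) s (g a)) (hf' : HasDerivWithinAt f' f'' s (g a))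
    (hg : HasDerivAt g g' a) (hgs : ∀ᶠ x in 𝓝 a, g x ∈ s) :
    HasDerivAt (fun x => f (g x) - f' (g x) * (g x - x))
      (f' (g a) - f'' * (g a - a) * g') a := by
  refine ((hf.comp_hasDerivAt a hg hgs).sub
    ((hf'.comp_hasDerivAt a hg hgs).mul (hg.sub (hasDerivAt_id a)))).congr_deriv ?_
  simp only [Function.comp_apply, Pi.sub_apply, id_eq]
  ring

end ImplicitDerivative

section Elasticity

variable {f f' : ℝ → ℝ} {f'' x y : ℝ} {s : Set ℝ}

lemma pos_of_hasDerivWithinAt_pos_of_nonneg {d : ℝ} (hs : s ∈ 𝓝[<] y)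
    (hf : HasDerivWithinAt f d s y) (hd : 0 < d) (hnonneg : ∀ t ∈ s, 0 ≤ f t) : 0 < f y := by
  have hslope : ∀ᶠ t in 𝓝[<] y, 0 < slope f y t :=
    ((hasDerivWithinAt_iff_tendsto_slope' self_notMem_Iio).1
      (hf.mono_of_mem_nhdsWithin hs)).eventually_const_lt hd
  obtain ⟨t, hpos, hts, hty⟩ := (hslope.and (inter_mem hs self_mem_nhdsWithin)).exists
  rw [slope_comm, slope_pos_iff hty] at hpos
  exact (hnonneg t hts).trans_lt hpos

lemma mul_sq_le_of_monotoneOn_elasticity (hs : AccPt y (𝓟 s))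
    (hf : HasDerivWithinAt f (f' y) s y) (hf' : HasDerivWithinAt f' f'' s y) (hpos : 0 < f y)
    (hmono : MonotoneOn (fun t => t * f' t / f t) s) :
    y * f' y ^ 2 ≤ f y * (f' y + y * f'') := by
  have hderiv := ((hasDerivWithinAt_id y s).mul hf').div hf hpos.ne'
  have hnonneg := hderiv.nonneg_of_monotoneOn hs hmono
  simp only [Pi.mul_apply, id_eq, le_div_iff₀ (pow_pos hpos 2)] at hnonneg
  linarith

lemma sub_mul_sq_le_of_monotoneOn_elasticity (hs : AccPt y (𝓟 s))
    (hf : HasDerivWithinAt f (f' y) s y) (hf' : HasDerivWithinAt f' f'' s y) (hpos : 0 < f y)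
    (hpos' : 0 ≤ f' y) (hmono : MonotoneOn (fun t => t * f' t / f t) s)
    (hx : 0 ≤ x) (hxy : x < y) :
    (y - x) * f' y ^ 2 ≤ f y * (f' y + f'' * (y - x)) := by
  have helas := mul_sq_le_of_monotoneOn_elasticity hs hf hf' hpos hmono
  refine le_of_mul_le_mul_left ?_ (hx.trans_lt hxy)
  calc y * ((y - x) * f' y ^ 2)
      = (y - x) * (y * f' y ^ 2) := by ring
    _ ≤ (y - x) * (f y * (f' y + y * f'')) :=
        mul_le_mul_of_nonneg_left helas (sub_nonneg.2 hxy.le)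
    _ ≤ (y - x) * (f y * (f' y + y * f'')) + x * (f y * f' y) :=
        le_add_of_nonneg_right (mul_nonneg hx (mul_nonneg hpos.le hpos'))
    _ = y * (f y * (f' y + f'' * (y - x))) := by ring

end Elasticity

theorem dual_loss_increasing_in_probability_general
    {φ φ' φ'' φ''' η : ℝ → ℝ} {s : Set ℝ} {ν x₀ : ℝ}
    (hd1 : ∀ t ∈ s, HasDerivWithinAt φ (φ' t) s t)
    (hd2 : ∀ t ∈ s, HasDerivWithinAt φ' (φ'' t) s t)
    (hd3 : ∀ t ∈ s, HasDerivWithinAt φ'' (φ''' t) s t)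
    (hφ'nonneg : ∀ t ∈ s, 0 ≤ φ' t)
    (helas : MonotoneOn (fun t => t * φ'' t / φ' t) s)
    (hν : 0 < ν) (hx₀ : 0 ≤ x₀) (hs : s ∈ 𝓝[<] (η x₀)) (hηcont : ContinuousAt η x₀)
    (hη : ∀ᶠ x in 𝓝 x₀, η x ∈ s ∧ x ≤ η x ∧ φ'' (η x) * (η x - x) = ν) :
    0 < φ'' (η x₀) + φ''' (η x₀) * (η x₀ - x₀) ∧
    HasDerivAt (fun x => φ (η x) - φ' (η x) * (η x - x))
      (φ' (η x₀) - ν * φ'' (η x₀) / (φ'' (η x₀) + φ''' (η x₀) * (η x₀ - x₀))) x₀ ∧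
    0 ≤ φ' (η x₀) - ν * φ'' (η x₀) / (φ'' (η x₀) + φ''' (η x₀) * (η x₀ - x₀)) := by
  obtain ⟨hy, hle, hνeq⟩ := hη.self_of_nhds
  have hηs : ∀ᶠ x in 𝓝 x₀, η x ∈ s := hη.mono fun _ h => h.1
  have hφ'' : 0 < φ'' (η x₀) := pos_of_mul_pos_left (hνeq ▸ hν) (sub_nonneg.2 hle)
  have hgap : 0 < η x₀ - x₀ := pos_of_mul_pos_right (hνeq ▸ hν) hφ''.le
  have hφ' : 0 < φ' (η x₀) :=
    pos_of_hasDerivWithinAt_pos_of_nonneg hs (hd2 _ hy) hφ'' hφ'nonneg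
  have hacc : AccPt (η x₀) (𝓟 s) :=
    accPt_iff_frequently_nhdsNE.2 ((Eventually.frequently hs).filter_mono (nhdsLT_le_nhdsNE _))
  have hbound : (η x₀ - x₀) * φ'' (η x₀) ^ 2 ≤
      φ' (η x₀) * (φ'' (η x₀) + φ''' (η x₀) * (η x₀ - x₀)) :=
    sub_mul_sq_le_of_monotoneOn_elasticity hacc (hd2 _ hy) (hd3 _ hy) hφ' hφ''.le helas hx₀
      (sub_pos.1 hgap)
  have hv : 0 < φ'' (η x₀) + φ''' (η x₀) * (η x₀ - x₀) :=
    pos_of_mul_pos_right ((mul_pos hgap (pow_pos hφ'' 2)).trans_le hbound) hφ'.le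
  have hηderiv := hasDerivAt_of_mul_sub_eq hν.ne' (hd3 _ hy) hv.ne' hηcont hηs
    (hη.mono fun _ h => h.2.2)
  refine ⟨hv, ?_, ?_⟩
  · rw [mul_div_assoc, ← hνeq]
    exact hasDerivAt_tangentLine_comp (hd1 _ hy) (hd2 _ hy) hηderiv hηs
  · rw [sub_nonneg, div_le_iff₀ hv, ← hνeq]
    linarith

/-- The per-coordinate dual loss contribution is nondecreasing in the
probability. Let `φ` be three times differentiable on `(0,1]` with `φ' ≥ 0` on
`(0,1]`, and suppose the elasticity `u(t) = t·φ''(t)/φ'(t)` is nondecreasing on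
`(0,1]`. Set `v(x,y) = φ''(y) + φ'''(y)(y − x)` and `ψ(x,y) = φ(y) − φ'(y)(y − x)`.
Fix `ν > 0` and `x₀ ∈ [0,1)`, and let `η` be differentiable on an open neighborhood
of `x₀` with `η(x) ∈ (0,1]`, `η(x) ≥ x`, `φ''(η(x))(η(x) − x) = ν`, and
`v(x₀, η(x₀)) > 0`. Then `x ↦ ψ(x, η(x))` has derivative
`φ'(η(x₀)) − ν·φ''(η(x₀))/v(x₀, η(x₀)) ≥ 0` at `x₀`. -/
theorem dual_loss_increasing_in_probability
    (φ φ' φ'' φ''' : ℝ → ℝ)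
    (hd1 : ∀ t ∈ Set.Ioc (0:ℝ) 1, HasDerivWithinAt φ (φ' t) (Set.Ioc 0 1) t)
    (hd2 : ∀ t ∈ Set.Ioc (0:ℝ) 1, HasDerivWithinAt φ' (φ'' t) (Set.Ioc 0 1) t)
    (hd3 : ∀ t ∈ Set.Ioc (0:ℝ) 1, HasDerivWithinAt φ'' (φ''' t) (Set.Ioc 0 1) t)
    (hφ'nonneg : ∀ t ∈ Set.Ioc (0:ℝ) 1, 0 ≤ φ' t)
    (helas : MonotoneOn (fun t => t * φ'' t / φ' t) (Set.Ioc 0 1))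
    (ν : ℝ) (hν : 0 < ν)
    (x₀ : ℝ) (hx₀ : x₀ ∈ Set.Ico (0:ℝ) 1)
    (U : Set ℝ) (hU : IsOpen U) (hx₀U : x₀ ∈ U)
    (η : ℝ → ℝ)
    (hηdiff : ∀ x ∈ U, DifferentiableAt ℝ η x)
    (hη : ∀ x ∈ U, η x ∈ Set.Ioc (0:ℝ) 1 ∧ x ≤ η x ∧ φ'' (η x) * (η x - x) = ν)
    (hv : 0 < φ'' (η x₀) + φ''' (η x₀) * (η x₀ - x₀)) :
    HasDerivAt (fun x => φ (η x) - φ' (η x) * (η x - x))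
      (φ' (η x₀) - ν * φ'' (η x₀) / (φ'' (η x₀) + φ''' (η x₀) * (η x₀ - x₀))) x₀ ∧
    0 ≤ φ' (η x₀) - ν * φ'' (η x₀) / (φ'' (η x₀) + φ''' (η x₀) * (η x₀ - x₀)) :=
  (dual_loss_increasing_in_probability_general hd1 hd2 hd3 hφ'nonneg helas hν hx₀.1
    (Ioc_mem_nhdsLT_of_mem (hη x₀ hx₀U).1) (hηdiff x₀ hx₀U).continuousAt
    ((hU.eventually_mem hx₀U).mono hη)).2
end
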